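/- arXiv:2307.09606 — 8 statements merged into one kernel-verified Lean document; each statement's English description precedes it below -/
import Mathlib

section
/- Let E be a finite set and let f : E → {a,b,c,d} be a uniformly random coloring. For any two distinct pairs of colors {s,t} and {s,u} sharing exactly one common color, and any two families 𝒜, ℬ of subsets of E, the events {E_{st}(f) ∈ 𝒜} and {E_{su}(f) ∈ ℬ} are independent: P(E_{st}(f) ∈ 𝒜 and E_{su}(f) ∈ ℬ) = P(E_{st}(f) ∈ 𝒜) · P(E_{su}(f) ∈ ℬ). Equivalently, counting colorings, 4^{|E|} · #{f : E_{st}(f) ∈ 𝒜, E_{su}(f) ∈ ℬ} = #{f : E_{st}(f) ∈ 𝒜} · #{f : E_{su}(f) ∈ ℬ}. -/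
/-!
A color `x : Fin 4` is determined by whether it lies in `{s, t}` and whether it lies in `{s, u}`:
the answers for `s`, `t`, `u` and the fourth color are (yes, yes), (yes, no), (no, yes), (no, no).
Hence `f ↦ (E_{st}(f), E_{su}(f))` is injective, and, as there are `4 ^ |E| = 2 ^ |E| * 2 ^ |E|`
colorings, it is a bijection onto all pairs of subsets of `E`. The two coordinates of a uniformly
random point of a product are independent.
-/

open Finset

/-- `Est f s t` is the set of elements colored `s` or `t` by the coloring `f`. -/
def Est {E : Type*} [Fintype E] [DecidableEq E] (f : E → Fin 4) (s t : Fin 4) : Finset E :=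
  Finset.univ.filter (fun e => f e = s ∨ f e = t)

section UniformIndependence

variable {Ω α β : Type*} [Fintype Ω] {X : Ω → α} {Y : Ω → β}

lemma card_filter_mem_and_mem_of_bijective [DecidableEq α] [DecidableEq β]
    (h : Function.Bijective fun ω ↦ (X ω, Y ω)) (A : Finset α) (B : Finset β) :
    #{ω | X ω ∈ A ∧ Y ω ∈ B} = #A * #B := by
  rw [← card_product]
  exact card_bijective _ h (by simp)

lemma card_filter_fst_mem_of_bijective [Fintype β] [DecidableEq α]
    (h : Function.Bijective fun ω ↦ (X ω, Y ω)) (A : Finset α) :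
    #{ω | X ω ∈ A} = #A * Fintype.card β := by
  classical simpa using card_filter_mem_and_mem_of_bijective h A univ

lemma card_filter_snd_mem_of_bijective [Fintype α] [DecidableEq β]
    (h : Function.Bijective fun ω ↦ (X ω, Y ω)) (B : Finset β) :
    #{ω | Y ω ∈ B} = Fintype.card α * #B := by
  classical simpa using card_filter_mem_and_mem_of_bijective h univ B

lemma card_mul_card_filter_mem_and_mem_of_bijective [Finite α] [Finite β] [DecidableEq α]
    [DecidableEq β] (h : Function.Bijective fun ω ↦ (X ω, Y ω)) (A : Finset α) (B : Finset β) :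
    Fintype.card Ω * #{ω | X ω ∈ A ∧ Y ω ∈ B} = #{ω | X ω ∈ A} * #{ω | Y ω ∈ B} := by
  cases nonempty_fintype α
  cases nonempty_fintype β
  rw [Fintype.card_of_bijective h, Fintype.card_prod, card_filter_mem_and_mem_of_bijective h,
    card_filter_fst_mem_of_bijective h, card_filter_snd_mem_of_bijective h]
  ring

lemma dens_filter_mem_and_mem_of_bijective [Finite α] [Finite β] [DecidableEq α]
    [DecidableEq β] (h : Function.Bijective fun ω ↦ (X ω, Y ω)) (A : Finset α) (B : Finset β) :
    dens {ω | X ω ∈ A ∧ Y ω ∈ B} = dens {ω | X ω ∈ A} * dens {ω | Y ω ∈ B} := by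
  cases isEmpty_or_nonempty Ω
  · simp
  have hcard : (Fintype.card Ω : ℚ≥0) ≠ 0 := by simp
  simp only [dens]
  rw [div_mul_div_comm, ← mul_div_mul_left _ _ hcard, ← Nat.cast_mul,
    card_mul_card_filter_mem_and_mem_of_bijective h, Nat.cast_mul]

end UniformIndependence

section Colorings

variable {s t u : Fin 4}

lemma color_eq_of_mem_pair_iff (hst : s ≠ t) (hsu : s ≠ u) (htu : t ≠ u) {x y : Fin 4}
    (hxy_st : x = s ∨ x = t ↔ y = s ∨ y = t) (hxy_su : x = s ∨ x = u ↔ y = s ∨ y = u) :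
    x = y := by
  omega

variable {E : Type*} [Fintype E] [DecidableEq E]

lemma mem_Est {f : E → Fin 4} {e : E} : e ∈ Est f s t ↔ f e = s ∨ f e = t := by
  simp [Est]

lemma Est_pair_injective (hst : s ≠ t) (hsu : s ≠ u) (htu : t ≠ u) :
    Function.Injective fun f : E → Fin 4 ↦ (Est f s t, Est f s u) := by
  intro f g hfg
  obtain ⟨hfg_st, hfg_su⟩ := Prod.mk.inj hfg
  ext1 e
  apply color_eq_of_mem_pair_iff hst hsu htu
  · rw [← mem_Est, hfg_st, mem_Est]
  · rw [← mem_Est, hfg_su, mem_Est]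

lemma Est_pair_bijective (hst : s ≠ t) (hsu : s ≠ u) (htu : t ≠ u) :
    Function.Bijective fun f : E → Fin 4 ↦ (Est f s t, Est f s u) := by
  refine (Fintype.bijective_iff_injective_and_card _).2 ⟨Est_pair_injective hst hsu htu, ?_⟩
  calc Fintype.card (E → Fin 4) = (2 * 2) ^ Fintype.card E := by simp
    _ = 2 ^ Fintype.card E * 2 ^ Fintype.card E := mul_pow ..
    _ = Fintype.card (Finset E × Finset E) := by simp

end Colorings

/-- For a uniformly random 4-coloring `f` of a finite set `E`, and two pairs of colors
`{s,t}` and `{s,u}` sharing exactly one common color, the events `E_{st}(f) ∈ 𝒜` and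
`E_{su}(f) ∈ ℬ` are independent. -/
theorem pairwise_independence (E : Type*) [Fintype E] [DecidableEq E]
    (s t u : Fin 4) (hst : s ≠ t) (hsu : s ≠ u) (htu : t ≠ u)
    (𝒜 ℬ : Finset (Finset E)) :
    ((Finset.univ.filter
        (fun f : E → Fin 4 => Est f s t ∈ 𝒜 ∧ Est f s u ∈ ℬ)).card : ℚ)
        / 4 ^ Fintype.card E
      = (((Finset.univ.filter (fun f : E → Fin 4 => Est f s t ∈ 𝒜)).card : ℚ)
            / 4 ^ Fintype.card E)
        * (((Finset.univ.filter (fun f : E → Fin 4 => Est f s u ∈ ℬ)).card : ℚ)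
            / 4 ^ Fintype.card E) ∧
    (4 : ℕ) ^ Fintype.card E *
        (Finset.univ.filter
          (fun f : E → Fin 4 => Est f s t ∈ 𝒜 ∧ Est f s u ∈ ℬ)).card
      = (Finset.univ.filter (fun f : E → Fin 4 => Est f s t ∈ 𝒜)).card *
        (Finset.univ.filter (fun f : E → Fin 4 => Est f s u ∈ ℬ)).card := by
  have hbij := Est_pair_bijective (E := E) hst hsu htu
  have hcard : Fintype.card (E → Fin 4) = 4 ^ Fintype.card E := by simp
  constructor
  · have hdens := congrArg (NNRat.cast : ℚ≥0 → ℚ) (dens_filter_mem_and_mem_of_bijective hbij 𝒜 ℬ)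
    rw [NNRat.cast_mul] at hdens
    simpa only [nnratCast_dens, hcard, Nat.cast_pow, Nat.cast_ofNat] using hdens
  · rw [← hcard]
    exact card_mul_card_filter_mem_and_mem_of_bijective hbij 𝒜 ℬ
end

section
/- Let E be a finite set and let f : E → {a,b,c,d} be a uniformly random coloring. For any closed upward families 𝒰, 𝒱, 𝒲 of subsets of E, writing 𝒰_{ab} for the event {E_{ab}(f) ∈ 𝒰}, 𝒱_{ac} for {E_{ac}(f) ∈ 𝒱}, and 𝒲_{bc} for {E_{bc}(f) ∈ 𝒲}, one has P(𝒰_{ab} ∩ 𝒱_{ac} ∩ 𝒲_{bc}) ≤ P(𝒰_{ab}) · P(𝒱_{ac}) · P(𝒲_{bc}). -/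
open Finset

/-!
Negative dependence of increasing functions tensorizes: to bound `𝔼 ∏ i, g i (X i, Y i)` for two
independent families `X` and `Y`, average over `Y` with `X` fixed, then over `X`, the averaged
functions still being increasing. Hence only one element of `E` has to be treated. For a single
random color the events `ab`, `ac`, `bc` occur in the patterns `110`, `101`, `011`, `000`, so for
functions `u`, `v`, `w` of these three bits the product of the means exceeds the mean of the
product by exactly `(u₁ - u₀) (v₁ - v₀) (w₁ - w₀) / 8`.
-/

open scoped BigOperators

/-- Negative upper orthant dependence of random variables `X i` with values in preordered sets,
defined on a finite set `Ω` with the uniform distribution: products of nonnegative monotone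
functions of the `X i` have expectation at most the product of the expectations. Rational-valued
test functions suffice because `Ω` is finite. -/
def NegUpperOrthantDep {ι Ω : Type*} [Fintype ι] [Fintype Ω] {α : ι → Type*}
    [∀ i, Preorder (α i)] (X : ∀ i, Ω → α i) : Prop :=
  ∀ g : ∀ i, α i → ℚ, (∀ i a, 0 ≤ g i a) → (∀ i, Monotone (g i)) →
    𝔼 ω, ∏ i, g i (X i ω) ≤ ∏ i, 𝔼 ω, g i (X i ω)

namespace NegUpperOrthantDep

universe u

variable {ι Ω Ω' : Type*} [Fintype ι] [Fintype Ω] [Fintype Ω'] {α β : ι → Type*}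
  [∀ i, Preorder (α i)] [∀ i, Preorder (β i)]

theorem of_unique [Unique Ω] (X : ∀ i, Ω → α i) : NegUpperOrthantDep X :=
  fun g _ _ => by simp

theorem map {X : ∀ i, Ω → α i} (hX : NegUpperOrthantDep X) {φ : ∀ i, α i → β i}
    (hφ : ∀ i, Monotone (φ i)) : NegUpperOrthantDep fun i ω => φ i (X i ω) :=
  fun g hg₀ hg => hX (fun i => g i ∘ φ i) (fun i _ => hg₀ i _) fun i => (hg i).comp (hφ i)

theorem comp_equiv {X : ∀ i, Ω → α i} (hX : NegUpperOrthantDep X) (e : Ω' ≃ Ω) :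
    NegUpperOrthantDep fun i ω => X i (e ω) := by
  intro g hg₀ hg
  have expect_comp (F : Ω → ℚ) : 𝔼 ω, F (e ω) = 𝔼 ω, F ω :=
    Fintype.expect_equiv e _ _ fun _ => rfl
  rw [expect_comp fun ω => ∏ i, g i (X i ω),
    Fintype.prod_congr _ _ fun i => expect_comp fun ω => g i (X i ω)]
  exact hX g hg₀ hg

theorem prodMk {X : ∀ i, Ω → α i} {Y : ∀ i, Ω' → β i} (hX : NegUpperOrthantDep X)
    (hY : NegUpperOrthantDep Y) :
    NegUpperOrthantDep fun i (ω : Ω × Ω') => (X i ω.1, Y i ω.2) := by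
  intro g hg₀ hg
  have expect_prod (F : Ω × Ω' → ℚ) : 𝔼 ω, F ω = 𝔼 ω, 𝔼 ω', F (ω, ω') :=
    expect_product univ univ F
  have avg_nonneg (i : ι) (a : α i) : 0 ≤ 𝔼 ω', g i (a, Y i ω') :=
    expect_nonneg fun _ _ => hg₀ i _
  have avg_mono (i : ι) : Monotone fun a => 𝔼 ω', g i (a, Y i ω') := fun a b hab =>
    expect_le_expect fun _ _ => hg i ⟨hab, le_rfl⟩
  calc 𝔼 ω : Ω × Ω', ∏ i, g i (X i ω.1, Y i ω.2)
      = 𝔼 ω, 𝔼 ω', ∏ i, g i (X i ω, Y i ω') := expect_prod _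
    _ ≤ 𝔼 ω, ∏ i, 𝔼 ω', g i (X i ω, Y i ω') := expect_le_expect fun ω _ =>
        hY (fun i b => g i (X i ω, b)) (fun i _ => hg₀ i _) fun i _ _ hb => hg i ⟨le_rfl, hb⟩
    _ ≤ ∏ i, 𝔼 ω, 𝔼 ω', g i (X i ω, Y i ω') :=
        hX (fun i a => 𝔼 ω', g i (a, Y i ω')) avg_nonneg avg_mono
    _ = ∏ i, 𝔼 ω : Ω × Ω', g i (X i ω.1, Y i ω.2) := by simp only [expect_prod]

theorem pi {E : Type u} [Finite E] {Ω : E → Type*} [∀ e, Fintype (Ω e)] [Fintype (∀ e, Ω e)]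
    {α : E → ι → Type*} [∀ e i, Preorder (α e i)] {X : ∀ e i, Ω e → α e i}
    (hX : ∀ e, NegUpperOrthantDep (X e)) :
    NegUpperOrthantDep fun i (ω : ∀ e, Ω e) e => X e i (ω e) := by
  induction E using Finite.induction_empty_option with
  | of_equiv σ ih =>
    have := Fintype.ofEquiv _ (Equiv.piCongrLeft Ω σ).symm
    have piCongrLeft_mono (i : ι) : Monotone (Equiv.piCongrLeft (fun e => α e i) σ) :=
      fun x y hxy => σ.surjective.forall.2 fun d => by
        simpa only [Equiv.piCongrLeft_apply_apply] using hxy d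
    convert ((ih fun d => hX (σ d)).comp_equiv (Equiv.piCongrLeft Ω σ).symm).map piCongrLeft_mono
      with i ω e
    obtain ⟨d, rfl⟩ := σ.surjective e
    simp [Equiv.piCongrLeft_apply_apply]
  | h_empty => exact of_unique _
  | h_option ih =>
    have := Fintype.ofFinite (∀ d, Ω (some d))
    have piOption_mono (i : ι) :
        Monotone (Equiv.piOptionEquivProd (β := fun e => α e i)).symm :=
      fun x y hxy => Option.forall.2 hxy
    convert (((hX none).prodMk (ih fun d => hX (some d))).comp_equiv
      Equiv.piOptionEquivProd).map piOption_mono with i ω e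
    cases e <;> rfl

theorem card_div_card_le_prod {X : ∀ i, Ω → α i} (hX : NegUpperOrthantDep X)
    {p : ∀ i, α i → Prop} [∀ i, DecidablePred (p i)]
    [DecidablePred fun ω => ∀ i, p i (X i ω)] (hp : ∀ i, Monotone (p i)) :
    (#{ω | ∀ i, p i (X i ω)} : ℚ) / Fintype.card Ω
      ≤ ∏ i, (#{ω | p i (X i ω)} : ℚ) / Fintype.card Ω := by
  have indicator_nonneg (i : ι) (a : α i) : (0 : ℚ) ≤ if p i a then 1 else 0 := by positivity
  have indicator_mono (i : ι) : Monotone fun a => if p i a then (1 : ℚ) else 0 := by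
    intro a b hab
    have hpab : p i a → p i b := hp i hab
    dsimp only
    split_ifs with ha hb
    exacts [le_rfl, absurd (hpab ha) hb, zero_le_one, le_rfl]
  have key := hX _ indicator_nonneg indicator_mono
  simp only [Fintype.expect_eq_sum_div_card, Fintype.prod_boole] at key
  simp only [natCast_card_filter]
  convert key

end NegUpperOrthantDep

/-- The pairs of colors `ab`, `ac`, `bc`. -/
def colorPair : Fin 3 → Fin 4 × Fin 4 := ![(0, 1), (0, 2), (1, 2)]

theorem negUpperOrthantDep_decide_colorPair :
    NegUpperOrthantDep fun i (c : Fin 4) => decide (c = (colorPair i).1 ∨ c = (colorPair i).2) := by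
  intro g _ hg
  have increment_nonneg (i : Fin 3) : 0 ≤ g i true - g i false :=
    sub_nonneg.2 (hg i (Bool.false_le _))
  have gap_nonneg := mul_nonneg (mul_nonneg (increment_nonneg 0) (increment_nonneg 1))
    (increment_nonneg 2)
  suffices (g 0 true * g 1 true * g 2 false + g 0 true * g 1 false * g 2 true
        + g 0 false * g 1 true * g 2 true + g 0 false * g 1 false * g 2 false) / 4
      ≤ (g 0 true + g 0 true + g 0 false + g 0 false) / 4
        * ((g 1 true + g 1 false + g 1 true + g 1 false) / 4)
        * ((g 2 false + g 2 true + g 2 true + g 2 false) / 4) by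
    simpa [Fintype.expect_eq_sum_div_card, Fin.sum_univ_four, Fin.prod_univ_three, colorPair,
      -prod_div_distrib] using this
  linear_combination gap_nonneg / 8

theorem negUpperOrthantDep_Est (E : Type*) [Fintype E] [DecidableEq E] :
    NegUpperOrthantDep fun i (f : E → Fin 4) => Est f (colorPair i).1 (colorPair i).2 := by
  have filter_mono : Monotone fun x : E → Bool => univ.filter fun e => x e = true :=
    fun x y hxy => monotone_filter_right _ fun e _ => hxy e
  simpa only [Est, decide_eq_true_eq] using
    (NegUpperOrthantDep.pi fun _ : E => negUpperOrthantDep_decide_colorPair).map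
      fun _ => filter_mono

/-- For a uniformly random 4-coloring of a finite set `E` and closed upward families
`𝒰, 𝒱, 𝒲`, the events `E_{ab}(f) ∈ 𝒰`, `E_{ac}(f) ∈ 𝒱`, `E_{bc}(f) ∈ 𝒲` are
negatively dependent:
`P(𝒰_{ab} ∩ 𝒱_{ac} ∩ 𝒲_{bc}) ≤ P(𝒰_{ab}) · P(𝒱_{ac}) · P(𝒲_{bc})`. -/
theorem colored_percolation_upward_neg_dep (E : Type*) [Fintype E] [DecidableEq E]
    (𝒰 𝒱 𝒲 : Finset (Finset E))
    (hU : ∀ A ∈ 𝒰, ∀ B : Finset E, A ⊆ B → B ∈ 𝒰)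
    (hV : ∀ A ∈ 𝒱, ∀ B : Finset E, A ⊆ B → B ∈ 𝒱)
    (hW : ∀ A ∈ 𝒲, ∀ B : Finset E, A ⊆ B → B ∈ 𝒲) :
    ((Finset.univ.filter (fun f : E → Fin 4 =>
        Est f 0 1 ∈ 𝒰 ∧ Est f 0 2 ∈ 𝒱 ∧ Est f 1 2 ∈ 𝒲)).card : ℚ)
        / 4 ^ Fintype.card E
      ≤ (((Finset.univ.filter (fun f : E → Fin 4 => Est f 0 1 ∈ 𝒰)).card : ℚ)
            / 4 ^ Fintype.card E)
        * (((Finset.univ.filter (fun f : E → Fin 4 => Est f 0 2 ∈ 𝒱)).card : ℚ)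
            / 4 ^ Fintype.card E)
        * (((Finset.univ.filter (fun f : E → Fin 4 => Est f 1 2 ∈ 𝒲)).card : ℚ)
            / 4 ^ Fintype.card E) := by
  set 𝒜 : Fin 3 → Finset (Finset E) := ![𝒰, 𝒱, 𝒲]
  have mem_mono (i : Fin 3) : Monotone fun A => A ∈ 𝒜 i := by
    intro A B hAB hA
    fin_cases i
    exacts [hU A hA B hAB, hV A hA B hAB, hW A hA B hAB]
  have key := (negUpperOrthantDep_Est E).card_div_card_le_prod mem_mono
  have inter_eq : (#{f : E → Fin 4 | ∀ i, Est f (colorPair i).1 (colorPair i).2 ∈ 𝒜 i})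
      = #{f : E → Fin 4 | Est f 0 1 ∈ 𝒰 ∧ Est f 0 2 ∈ 𝒱 ∧ Est f 1 2 ∈ 𝒲} := by
    simp [Fin.forall_fin_succ, colorPair, 𝒜]
  have card_coloring : (Fintype.card (E → Fin 4) : ℚ) = 4 ^ Fintype.card E := by simp
  rw [inter_eq, card_coloring, Fin.prod_univ_three] at key
  exact key
end

section
/- Let E be a finite set and let f : E → {a,b,c,d} be a uniformly random coloring. For any closed downward families 𝒰, 𝒱, 𝒲 of subsets of E, writing 𝒰_{ab} for the event {E_{ab}(f) ∈ 𝒰}, 𝒱_{ac} for {E_{ac}(f) ∈ 𝒱}, and 𝒲_{bc} for {E_{bc}(f) ∈ 𝒲}, one has P(𝒰_{ab} ∩ 𝒱_{ac} ∩ 𝒲_{bc}) ≥ P(𝒰_{ab}) · P(𝒱_{ac}) · P(𝒲_{bc}). -/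
open Finset

/-!
Positive dependence, tested on products of antitone functions, passes to independent coordinates:
averaging an antitone function over all coordinates but one leaves an antitone function of the
remaining coordinate. Everything is thereby reduced to `|E| = 1`.

There the events `x ∈ {a, b}`, `x ∈ {a, c}`, `x ∈ {b, c}` for a random color `x` are pairwise
independent, so only their triple correlation matters. Put `ε = -1` if an event occurs and `ε = 1`
if it does not. Then `ε_ab * ε_ac * ε_bc = 1` for each of the four colors, so the triple correlation
of antitone functions of the three events is the product of their drops divided by `8`.
-/

open scoped BigOperators

theorem dens_filter_eq_expect {κ : Type*} [Fintype κ] (p : κ → Prop) [DecidablePred p] :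
    (univ.filter p).dens = 𝔼 c, if p c then (1 : ℚ≥0) else 0 := by
  simp [dens_eq_card_div_card, Fintype.expect_eq_sum_div_card]

/-- The random variables `π i`, all functions of a uniformly random point of `κ`, are positively
dependent: `𝔼 ∏ i, u i (π i) ≥ ∏ i, 𝔼 u i (π i)` for all antitone `u i`. Nonnegativity of the `u i`
is encoded in the codomain `ℚ≥0`; averages over an empty `κ` are `0`. -/
def IsPositivelyDependent {ι κ : Type*} [Fintype ι] [Fintype κ] {α : ι → Type*}
    [∀ i, Preorder (α i)] (π : ∀ i, κ → α i) : Prop :=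
  ∀ u : ∀ i, α i → ℚ≥0, (∀ i, Antitone (u i)) →
    ∏ i, 𝔼 c, u i (π i c) ≤ 𝔼 c, ∏ i, u i (π i c)

namespace IsPositivelyDependent

variable {ι κ κ' : Type*} [Fintype ι] [Fintype κ] [Fintype κ'] {α β : ι → Type*}
  [∀ i, Preorder (α i)] [∀ i, Preorder (β i)] {π : ∀ i, κ → α i} {ρ : ∀ i, κ' → β i}

theorem of_unique [Unique κ] (π : ∀ i, κ → α i) : IsPositivelyDependent π :=
  fun u _ => by simp

theorem comp_equiv (hπ : IsPositivelyDependent π) (e : κ' ≃ κ) :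
    IsPositivelyDependent fun i c => π i (e c) := by
  intro u hu
  have expect_comp (F : κ → ℚ≥0) : 𝔼 c, F (e c) = 𝔼 c, F c :=
    Fintype.expect_equiv e _ _ fun _ => rfl
  calc ∏ i, 𝔼 c, u i (π i (e c))
      = ∏ i, 𝔼 c, u i (π i c) := prod_congr rfl fun i _ => expect_comp fun c => u i (π i c)
    _ ≤ 𝔼 c, ∏ i, u i (π i c) := hπ u hu
    _ = 𝔼 c, ∏ i, u i (π i (e c)) := (expect_comp fun c => ∏ i, u i (π i c)).symm

theorem monotone_comp (hπ : IsPositivelyDependent π) {g : ∀ i, α i → β i}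
    (hg : ∀ i, Monotone (g i)) : IsPositivelyDependent fun i c => g i (π i c) :=
  fun u hu => hπ (fun i => u i ∘ g i) fun i => (hu i).comp_monotone (hg i)

theorem prodMap (hπ : IsPositivelyDependent π) (hρ : IsPositivelyDependent ρ) :
    IsPositivelyDependent fun i => Prod.map (π i) (ρ i) := by
  intro u hu
  have antitone_average i : Antitone fun a => 𝔼 d, u i (a, ρ i d) :=
    fun _ _ h => expect_le_expect fun _ _ => hu i ⟨h, le_rfl⟩
  have antitone_section i a : Antitone fun b => u i (a, b) := fun _ _ h => hu i ⟨le_rfl, h⟩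
  simp only [← univ_product_univ, expect_product, Prod.map_apply]
  calc ∏ i, 𝔼 c, 𝔼 d, u i (π i c, ρ i d)
      ≤ 𝔼 c, ∏ i, 𝔼 d, u i (π i c, ρ i d) := hπ (fun i a => 𝔼 d, u i (a, ρ i d)) antitone_average
    _ ≤ 𝔼 c, 𝔼 d, ∏ i, u i (π i c, ρ i d) :=
      expect_le_expect fun c _ => hρ (fun i b => u i (π i c, b)) fun i => antitone_section i (π i c)

theorem piMap_of_equiv {A B : Type*} [Fintype A] [DecidableEq A] [Fintype B] [DecidableEq B]
    (e : A ≃ B) {κ : B → Type*} [∀ b, Fintype (κ b)]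
    {α : B → ι → Type*} [∀ b i, Preorder (α b i)] {π : ∀ b i, κ b → α b i}
    (h : IsPositivelyDependent fun i => Pi.map fun a => π (e a) i) :
    IsPositivelyDependent fun i => Pi.map fun b => π b i := by
  have monotone_reindex i : Monotone (Equiv.piCongrLeft (α · i) e) := fun x y hxy =>
    e.forall_congr_right.1 fun a => by simpa using hxy a
  convert (h.comp_equiv (Equiv.piCongrLeft κ e).symm).monotone_comp monotone_reindex with i f
  exact ((Equiv.piCongrLeft (α · i) e).apply_symm_apply _).symm

theorem piMap_option {A : Type*} [Fintype A] [DecidableEq A] {κ : Option A → Type*}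
    [∀ a, Fintype (κ a)] {α : Option A → ι → Type*} [∀ a i, Preorder (α a i)]
    {π : ∀ a i, κ a → α a i} (hnone : IsPositivelyDependent (π none))
    (hsome : IsPositivelyDependent fun i => Pi.map fun a => π (some a) i) :
    IsPositivelyDependent fun i => Pi.map fun a => π a i := by
  have monotone_cons i : Monotone (Equiv.piOptionEquivProd (β := (α · i))).symm :=
    fun _ _ hxy a => Option.casesOn a hxy.1 hxy.2
  convert ((hnone.prodMap hsome).comp_equiv Equiv.piOptionEquivProd).monotone_comp monotone_cons
    with i f
  exact (Equiv.piOptionEquivProd.symm_apply_apply _).symm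

theorem piMap {E : Type*} [Fintype E] [DecidableEq E] {κ : E → Type*} [∀ e, Fintype (κ e)]
    {α : E → ι → Type*} [∀ e i, Preorder (α e i)] {π : ∀ e i, κ e → α e i}
    (hπ : ∀ e, IsPositivelyDependent (π e)) :
    IsPositivelyDependent fun i => Pi.map fun e => π e i := by
  classical
  refine Fintype.induction_empty_option (P := fun E _ => ∀ [DecidableEq E] (κ : E → Type _)
    [∀ e, Fintype (κ e)] (α : E → ι → Type _) [∀ e i, Preorder (α e i)]
    (π : ∀ e i, κ e → α e i), (∀ e, IsPositivelyDependent (π e)) →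
      IsPositivelyDependent fun i => Pi.map fun e => π e i) ?_ ?_ ?_ E κ α π hπ
  · intro A B _ e ih _ κ _ α _ π hπ
    have := Fintype.ofEquiv B e.symm
    refine piMap_of_equiv e ?_
    convert ih _ _ _ fun a => hπ (e a)
  · intro _ κ _ α _ π _
    exact of_unique _
  · intro A _ ih _ κ _ α _ π hπ
    convert piMap_option (hπ none) (ih _ _ _ fun a => hπ (some a))

theorem prod_dens_le_dens (hπ : IsPositivelyDependent π) {S : ∀ i, Set (α i)}
    (hS : ∀ i, IsLowerSet (S i)) [∀ i, DecidablePred (· ∈ S i)] :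
    ∏ i, (univ.filter (π i · ∈ S i)).dens ≤ (univ.filter fun c => ∀ i, π i c ∈ S i).dens := by
  have antitone_indicator i : Antitone fun a => if a ∈ S i then (1 : ℚ≥0) else 0 := by
    intro a b hab
    dsimp only
    split_ifs with hb ha
    exacts [le_rfl, absurd (hS i hab hb) ha, zero_le_one, le_rfl]
  simpa only [dens_filter_eq_expect, Fintype.prod_boole] using hπ _ antitone_indicator

end IsPositivelyDependent

theorem isPositivelyDependent_colorPair :
    IsPositivelyDependent fun i c => c = (colorPair i).1 ∨ c = (colorPair i).2 := by
  intro u hu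
  have drop i : ∃ d, u i False = u i True + d := exists_add_of_le (hu i False.elim)
  choose d hd using drop
  have marginal i : 𝔼 c, u i (c = (colorPair i).1 ∨ c = (colorPair i).2) = u i True + d i / 2 := by
    fin_cases i <;>
    · simp only [colorPair, Fintype.expect_eq_sum_div_card, Fintype.card_fin, Fin.sum_univ_four,
        Fin.zero_eta, Fin.mk_one, Fin.reduceFinMk, Fin.isValue, Fin.reduceEq, Matrix.cons_val,
        or_false, or_true, or_self, hd, Nat.cast_ofNat]
      ring
  have joint : 𝔼 c, ∏ i, u i (c = (colorPair i).1 ∨ c = (colorPair i).2) =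
      ∏ i, (u i True + d i / 2) + (∏ i, d i) / 8 := by
    calc 𝔼 c, ∏ i, u i (c = (colorPair i).1 ∨ c = (colorPair i).2)
        = (u 0 True * u 1 True * u 2 False + u 0 True * u 1 False * u 2 True +
            u 0 False * u 1 True * u 2 True + u 0 False * u 1 False * u 2 False) / 4 := by
          simp [Fintype.expect_eq_sum_div_card, colorPair, Fin.sum_univ_four, Fin.prod_univ_three]
      _ = ∏ i, (u i True + d i / 2) + (∏ i, d i) / 8 := by
          simp only [Fin.prod_univ_three, hd]
          ring
  simp only [marginal, joint, le_self_add]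

theorem isPositivelyDependent_est (E : Type*) [Fintype E] [DecidableEq E] :
    IsPositivelyDependent fun i (f : E → Fin 4) => Est f (colorPair i).1 (colorPair i).2 := by
  classical
  have monotone_filter : Monotone fun x : E → Prop => univ.filter x :=
    fun x y h => monotone_filter_right _ fun e _ => h e
  convert (IsPositivelyDependent.piMap fun _ : E =>
    isPositivelyDependent_colorPair).monotone_comp fun _ => monotone_filter
  ext e
  simp [Est]

/-- For a uniformly random 4-coloring of a finite set `E` and closed downward families
`𝒰, 𝒱, 𝒲`:
`P(𝒰_{ab} ∩ 𝒱_{ac} ∩ 𝒲_{bc}) ≥ P(𝒰_{ab}) · P(𝒱_{ac}) · P(𝒲_{bc})`. -/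
theorem colored_percolation_downward_pos_dep (E : Type*) [Fintype E] [DecidableEq E]
    (𝒰 𝒱 𝒲 : Finset (Finset E))
    (hU : ∀ A ∈ 𝒰, ∀ B : Finset E, B ⊆ A → B ∈ 𝒰)
    (hV : ∀ A ∈ 𝒱, ∀ B : Finset E, B ⊆ A → B ∈ 𝒱)
    (hW : ∀ A ∈ 𝒲, ∀ B : Finset E, B ⊆ A → B ∈ 𝒲) :
    ((Finset.univ.filter (fun f : E → Fin 4 =>
        Est f 0 1 ∈ 𝒰 ∧ Est f 0 2 ∈ 𝒱 ∧ Est f 1 2 ∈ 𝒲)).card : ℚ)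
        / 4 ^ Fintype.card E
      ≥ (((Finset.univ.filter (fun f : E → Fin 4 => Est f 0 1 ∈ 𝒰)).card : ℚ)
            / 4 ^ Fintype.card E)
        * (((Finset.univ.filter (fun f : E → Fin 4 => Est f 0 2 ∈ 𝒱)).card : ℚ)
            / 4 ^ Fintype.card E)
        * (((Finset.univ.filter (fun f : E → Fin 4 => Est f 1 2 ∈ 𝒲)).card : ℚ)
            / 4 ^ Fintype.card E) := by
  have dens_eq (p : (E → Fin 4) → Prop) [DecidablePred p] :
      ((univ.filter p).card : ℚ) / 4 ^ Fintype.card E = ((univ.filter p).dens : ℚ) := by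
    simp [nnratCast_dens]
  let 𝒮 : Fin 3 → Set (Finset E) := ![𝒰, 𝒱, 𝒲]
  have isLowerSet_𝒮 i : IsLowerSet (𝒮 i) := by
    fin_cases i
    exacts [fun A B h hA => hU A hA B h, fun A B h hA => hV A hA B h, fun A B h hA => hW A hA B h]
  classical
  have dens_le := (isPositivelyDependent_est E).prod_dens_le_dens isLowerSet_𝒮
  simp only [dens_eq, ge_iff_le]
  norm_cast
  simpa [Fin.prod_univ_three, Fin.forall_fin_succ, 𝒮, colorPair] using dens_le
end

section
/- Let E be a finite set and let f : E → {a,b,c,d} be a uniformly random coloring. For any closed downward families 𝒰, 𝒱, 𝒲 of subsets of E, writing 𝒰_{ab} for the event {E_{ab}(f) ∈ 𝒰}, 𝒱_{ac} for {E_{ac}(f) ∈ 𝒱}, and 𝒲_{ad} for {E_{ad}(f) ∈ 𝒲}, one has P(𝒰_{ab} ∩ 𝒱_{ac} ∩ 𝒲_{ad}) ≤ P(𝒰_{ab}) · P(𝒱_{ac}) · P(𝒲_{ad}). -/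
open Finset

/-!
Color one element uniformly from `{a, b, c, d}`. For antitone functions `u`, `v`, `w` of the
events "color in `{a, b}`", "color in `{a, c}`", "color in `{a, d}`", with values `u₁` if the
event happens and `u₀ ≥ u₁` otherwise (and likewise for `v`, `w`),
`𝔼 u * 𝔼 v * 𝔼 w - 𝔼 (u * v * w) = (u₀ - u₁) * (v₀ - v₁) * (w₀ - w₁) / 8 ≥ 0`.
Negative dependence in this sense passes to products of independent copies: condition on the first
copy, apply the inequality to the second one, and observe that averaging an antitone function over
the second copy leaves an antitone function of the first.
-/

open scoped BigOperators

/-- Negative dependence, with respect to lower sets, of random variables `X j` on a finite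
probability space `Ω` with the uniform distribution. The condition
`P (∀ j, X j ∈ L j) ≤ ∏ j, P (X j ∈ L j)` for lower sets `L j` is stated in its equivalent form for
nonnegative antitone functions in place of indicators of lower sets, because that form is
inherited by product spaces. -/
def LowerNegDep {J Ω : Type*} {α : J → Type*} [Fintype J] [Fintype Ω] [∀ j, Preorder (α j)]
    (X : ∀ j, Ω → α j) : Prop :=
  ∀ u : ∀ j, α j → ℚ, (∀ j, 0 ≤ u j) → (∀ j, Antitone (u j)) →
    𝔼 ω, ∏ j, u j (X j ω) ≤ ∏ j, 𝔼 ω, u j (X j ω)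

namespace LowerNegDep

variable {J Ω Ω' : Type*} {α β : J → Type*} [Fintype J] [Fintype Ω] [Fintype Ω']
  [∀ j, Preorder (α j)] [∀ j, Preorder (β j)]

theorem of_unique [Unique Ω] (X : ∀ j, Ω → α j) : LowerNegDep X := by
  simp [LowerNegDep]

theorem comp_equiv {X : ∀ j, Ω → α j} (hX : LowerNegDep X) (e : Ω' ≃ Ω) :
    LowerNegDep fun j ω => X j (e ω) := fun u hu₀ hu => by
  have expect_comp (F : Ω → ℚ) : 𝔼 ω, F (e ω) = 𝔼 ω, F ω :=
    Fintype.expect_equiv e _ _ fun _ => rfl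
  calc 𝔼 ω, ∏ j, u j (X j (e ω))
      = 𝔼 ω, ∏ j, u j (X j ω) := expect_comp fun ω => ∏ j, u j (X j ω)
    _ ≤ ∏ j, 𝔼 ω, u j (X j ω) := hX u hu₀ hu
    _ = ∏ j, 𝔼 ω, u j (X j (e ω)) :=
      Finset.prod_congr rfl fun j _ => (expect_comp fun ω => u j (X j ω)).symm

theorem monotone_comp {X : ∀ j, Ω → α j} (hX : LowerNegDep X) {g : ∀ j, α j → β j}
    (hg : ∀ j, Monotone (g j)) : LowerNegDep fun j ω => g j (X j ω) := fun u hu₀ hu =>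
  hX (fun j a => u j (g j a)) (fun j a => hu₀ j (g j a)) fun j => (hu j).comp_monotone (hg j)

theorem prodMap {X : ∀ j, Ω → α j} {Y : ∀ j, Ω' → β j} (hX : LowerNegDep X)
    (hY : LowerNegDep Y) : LowerNegDep fun j => Prod.map (X j) (Y j) := fun u hu₀ hu => by
  let U (j : J) (a : α j) : ℚ := 𝔼 ω', u j (a, Y j ω')
  have U_nonneg (j : J) : 0 ≤ U j := fun a => Finset.expect_nonneg fun ω' _ => hu₀ j (a, Y j ω')
  have U_antitone (j : J) : Antitone (U j) := fun _ _ h =>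
    Finset.expect_le_expect fun _ _ => hu j (Prod.mk_le_mk.2 ⟨h, le_rfl⟩)
  have expect_prod (F : Ω × Ω' → ℚ) : 𝔼 p, F p = 𝔼 ω, 𝔼 ω', F (ω, ω') := by
    rw [← Finset.univ_product_univ, Finset.expect_product]
  have conditional_le (ω : Ω) : 𝔼 ω', ∏ j, u j (X j ω, Y j ω') ≤ ∏ j, U j (X j ω) :=
    hY (fun j b => u j (X j ω, b)) (fun j b => hu₀ j (X j ω, b)) fun j _ _ h =>
      hu j (Prod.mk_le_mk.2 ⟨le_rfl, h⟩)
  calc 𝔼 p : Ω × Ω', ∏ j, u j (Prod.map (X j) (Y j) p)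
      = 𝔼 ω, 𝔼 ω', ∏ j, u j (X j ω, Y j ω') := expect_prod _
    _ ≤ 𝔼 ω, ∏ j, U j (X j ω) := Finset.expect_le_expect fun ω _ => conditional_le ω
    _ ≤ ∏ j, 𝔼 ω, U j (X j ω) := hX U U_nonneg U_antitone
    _ = ∏ j, 𝔼 p, u j (Prod.map (X j) (Y j) p) :=
      Finset.prod_congr rfl fun j _ => (expect_prod fun p => u j (Prod.map (X j) (Y j) p)).symm

theorem pi_fin {X : ∀ j, Ω → α j} (hX : LowerNegDep X) (n : ℕ) :
    LowerNegDep fun j (f : Fin n → Ω) i => X j (f i) := by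
  induction n with
  | zero => exact of_unique _
  | succ n ih =>
    have cons_monotone (j : J) :
        Monotone fun p : α j × (Fin n → α j) => (Fin.cons p.1 p.2 : Fin (n + 1) → α j) :=
      fun _ _ h => Fin.cons_le_cons.2 h
    convert ((hX.prodMap ih).monotone_comp cons_monotone).comp_equiv
      (Fin.consEquiv fun _ : Fin (n + 1) => Ω).symm with j f i
    cases i using Fin.cases <;> rfl

theorem pi {X : ∀ j, Ω → α j} (hX : LowerNegDep X) (E : Type*) [Fintype E] [DecidableEq E] :
    LowerNegDep fun j (f : E → Ω) e => X j (f e) := by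
  let σ := Fintype.equivFin E
  have reindex_monotone (j : J) : Monotone fun (g : Fin (Fintype.card E) → α j) e => g (σ e) :=
    fun _ _ h e => h (σ e)
  simpa using
    ((hX.pi_fin _).monotone_comp reindex_monotone).comp_equiv (σ.arrowCongr (Equiv.refl Ω))

theorem dens_le {X : ∀ j, Ω → α j} (hX : LowerNegDep X) {L : ∀ j, Set (α j)}
    [∀ j, DecidablePred (· ∈ L j)] (hL : ∀ j, IsLowerSet (L j)) :
    dens {ω | ∀ j, X j ω ∈ L j} ≤ ∏ j, dens {ω | X j ω ∈ L j} := by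
  let u (j : J) (a : α j) : ℚ := if a ∈ L j then 1 else 0
  have u_nonneg (j : J) : 0 ≤ u j := fun a => by positivity
  have u_antitone (j : J) : Antitone (u j) := fun a b h => by
    by_cases hb : b ∈ L j
    · simp [u, hb, hL j h hb]
    · simpa [u, hb] using u_nonneg j a
  have expect_indicator (p : Ω → Prop) [DecidablePred p] :
      𝔼 ω, (if p ω then (1 : ℚ) else 0) = dens {ω | p ω} := by
    rw [Fintype.expect_eq_sum_div_card, Finset.sum_boole, Finset.nnratCast_dens]
  have h := hX u u_nonneg u_antitone
  simp only [u, Finset.prod_ite_zero, Finset.prod_const_one, Finset.mem_univ, true_imp_iff,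
    expect_indicator] at h
  exact_mod_cast h

end LowerNegDep

-- The four summands of each average belong to the colors `a`, `b`, `c`, `d`, in this order.
theorem average_mul_mul_le {𝕜 : Type*} [Field 𝕜] [LinearOrder 𝕜] [IsStrictOrderedRing 𝕜]
    {u₀ u₁ v₀ v₁ w₀ w₁ : 𝕜} (hu : u₁ ≤ u₀) (hv : v₁ ≤ v₀) (hw : w₁ ≤ w₀) :
    (u₁ * v₁ * w₁ + u₁ * v₀ * w₀ + u₀ * v₁ * w₀ + u₀ * v₀ * w₁) / 4
      ≤ (u₁ + u₁ + u₀ + u₀) / 4 * ((v₁ + v₀ + v₁ + v₀) / 4) * ((w₁ + w₀ + w₀ + w₁) / 4) := by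
  have h : 0 ≤ (u₀ - u₁) * (v₀ - v₁) * (w₀ - w₁) :=
    mul_nonneg (mul_nonneg (sub_nonneg.2 hu) (sub_nonneg.2 hv)) (sub_nonneg.2 hw)
  linarith

theorem lowerNegDep_decide_eq_zero_or_eq_succ :
    LowerNegDep fun (j : Fin 3) (c : Fin 4) => decide (c = 0 ∨ c = j.succ) := fun u _ hu => by
  have h (j : Fin 3) : u j true ≤ u j false := hu j (Bool.false_le true)
  simpa [Fintype.expect_eq_sum_div_card, Fin.sum_univ_four, Fin.prod_univ_three,
    -Finset.prod_div_distrib] using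
    average_mul_mul_le (h 0) (h 1) (h 2)

theorem lowerNegDep_est (E : Type*) [Fintype E] [DecidableEq E] :
    LowerNegDep fun (j : Fin 3) (f : E → Fin 4) => Est f 0 j.succ := by
  have filter_monotone (_ : Fin 3) : Monotone fun g : E → Bool => ({e | g e} : Finset E) :=
    fun _ _ h => Finset.monotone_filter_right _ fun e _ he => h e he
  simpa [Est] using (lowerNegDep_decide_eq_zero_or_eq_succ.pi E).monotone_comp filter_monotone

/-- For a uniformly random 4-coloring of a finite set `E` and closed downward families
`𝒰, 𝒱, 𝒲`:
`P(𝒰_{ab} ∩ 𝒱_{ac} ∩ 𝒲_{ad}) ≤ P(𝒰_{ab}) · P(𝒱_{ac}) · P(𝒲_{ad})`. -/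
theorem colored_percolation_downward_neg_dep (E : Type*) [Fintype E] [DecidableEq E]
    (𝒰 𝒱 𝒲 : Finset (Finset E))
    (hU : ∀ A ∈ 𝒰, ∀ B : Finset E, B ⊆ A → B ∈ 𝒰)
    (hV : ∀ A ∈ 𝒱, ∀ B : Finset E, B ⊆ A → B ∈ 𝒱)
    (hW : ∀ A ∈ 𝒲, ∀ B : Finset E, B ⊆ A → B ∈ 𝒲) :
    ((Finset.univ.filter (fun f : E → Fin 4 =>
        Est f 0 1 ∈ 𝒰 ∧ Est f 0 2 ∈ 𝒱 ∧ Est f 0 3 ∈ 𝒲)).card : ℚ)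
        / 4 ^ Fintype.card E
      ≤ (((Finset.univ.filter (fun f : E → Fin 4 => Est f 0 1 ∈ 𝒰)).card : ℚ)
            / 4 ^ Fintype.card E)
        * (((Finset.univ.filter (fun f : E → Fin 4 => Est f 0 2 ∈ 𝒱)).card : ℚ)
            / 4 ^ Fintype.card E)
        * (((Finset.univ.filter (fun f : E → Fin 4 => Est f 0 3 ∈ 𝒲)).card : ℚ)
            / 4 ^ Fintype.card E) := by
  have dens_eq (s : Finset (E → Fin 4)) : (s.card : ℚ) / 4 ^ Fintype.card E = s.dens := by
    simp [Finset.nnratCast_dens]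
  have isLowerSet_families (j : Fin 3) : IsLowerSet (![𝒰, 𝒱, 𝒲] j : Set (Finset E)) := by
    fin_cases j
    exacts [fun A B hBA hA => hU A hA B hBA, fun A B hBA hA => hV A hA B hBA,
      fun A B hBA hA => hW A hA B hBA]
  have h : dens {f : E → Fin 4 | Est f 0 1 ∈ 𝒰 ∧ Est f 0 2 ∈ 𝒱 ∧ Est f 0 3 ∈ 𝒲}
      ≤ dens {f : E → Fin 4 | Est f 0 1 ∈ 𝒰} * dens {f : E → Fin 4 | Est f 0 2 ∈ 𝒱}
        * dens {f : E → Fin 4 | Est f 0 3 ∈ 𝒲} := by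
    convert (lowerNegDep_est E).dens_le isLowerSet_families using 1
    · simp [Fin.forall_fin_succ]
    · rw [Fin.prod_univ_three]
      rfl
  simp only [dens_eq]
  exact_mod_cast h
end

section
/- Let E be a finite set, let k ≥ 1, and let f : E → ({0,1}^k) be chosen uniformly at random (equivalently, S_1, …, S_k are independent uniform random subsets of E, S_i := {e ∈ E : f(e)_i = 1}). Define S_{k+1} := {e ∈ E : the number of indices i ∈ {1,…,k} with e ∈ S_i is odd} (the mod-2 sum of S_1,…,S_k). Then for any closed downward families 𝒳_1, …, 𝒳_{k+1} of subsets of E, P(S_1 ∈ 𝒳_1 and … and S_{k+1} ∈ 𝒳_{k+1}) ≥ P(S_1 ∈ 𝒳_1) · ⋯ · P(S_{k+1} ∈ 𝒳_{k+1}). -/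
open Finset

/-- Given `f : E → ({0,1}^k)`, `Ssub f i` for `i < k` is the `i`-th coordinate random subset
`S_i = {e : f(e)_i = 1}`, and `Ssub f (Fin.last k)` is the mod-2 sum
`S_{k+1} = {e : e lies in an odd number of the S_i}`. -/
def Ssub {E : Type*} [Fintype E] [DecidableEq E] {k : ℕ}
    (f : E → (Fin k → Bool)) (i : Fin (k + 1)) : Finset E :=
  if h : (i : ℕ) < k then
    Finset.univ.filter (fun e => f e ⟨(i : ℕ), h⟩ = true)
  else
    Finset.univ.filter (fun e => Odd ((Finset.univ.filter (fun j => f e j = true)).card))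

open scoped BigOperators

/-!
Call random variables positively dependent if the expectation of a product of decreasing functions
of them is at least the product of the expectations. Positive dependence tensorizes: it passes to
independent products, hence it suffices to treat a one-point ground set.

There, Fourier analysis on the group of order two settles the matter. If `b₁, …, b_{k+1}` are
uniform random bits conditioned on having even sum, the only characters with nonzero expectation
are the trivial one and the product of all the signs, so `𝔼 ∏ Gᵢ(bᵢ) = ∏ Ĝᵢ(0) + ∏ Ĝᵢ(1)`. The first
term is the product of the expectations, and `Ĝᵢ(1) ≥ 0` for decreasing `Gᵢ`.
-/

section PositiveDependence

variable {ι V W α β : Type*} [Fintype ι] [Fintype V] [Fintype W] [Preorder α] [Preorder β]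

/-- Positive dependence of the family `X` of random elements of `α`, defined on the finite sample
space `V` with its uniform distribution: antitone functions of the individual `X i` satisfy
`∏ 𝔼 (G i (X i)) ≤ 𝔼 (∏ G i (X i))`. The functions `G i` need not be nonnegative. -/
def PosDep (R : Type*) [Field R] [LinearOrder R] [IsStrictOrderedRing R]
    (X : ι → V → α) : Prop :=
  ∀ G : ι → α → R, (∀ i, Antitone (G i)) →
    ∏ i, 𝔼 v, G i (X i v) ≤ 𝔼 v, ∏ i, G i (X i v)

namespace PosDep

variable {R : Type*} [Field R] [LinearOrder R] [IsStrictOrderedRing R]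

lemma of_subsingleton [Nonempty V] [Subsingleton V] (X : ι → V → α) : PosDep R X := by
  intro G _
  obtain ⟨v⟩ := ‹Nonempty V›
  have expect_eq (F : V → R) : 𝔼 w, F w = F v := by
    simp only [Subsingleton.elim _ v, Fintype.expect_const]
  simp only [expect_eq, le_refl]

lemma comp_equiv {X : ι → V → α} (hX : PosDep R X) (e : W ≃ V) :
    PosDep R fun i w => X i (e w) := by
  intro G hG
  have reindex (F : V → R) : 𝔼 w, F (e w) = 𝔼 v, F v :=
    Fintype.expect_equiv e _ _ fun _ => rfl
  calc ∏ i, 𝔼 w, G i (X i (e w))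
      = ∏ i, 𝔼 v, G i (X i v) := prod_congr rfl fun i _ => reindex fun v => G i (X i v)
    _ ≤ 𝔼 v, ∏ i, G i (X i v) := hX G hG
    _ = 𝔼 w, ∏ i, G i (X i (e w)) := (reindex fun v => ∏ i, G i (X i v)).symm

lemma map {X : ι → V → α} (hX : PosDep R X) {φ : α → β} (hφ : Monotone φ) :
    PosDep R fun i v => φ (X i v) :=
  fun G hG => hX (fun i a => G i (φ a)) fun i => (hG i).comp_monotone hφ

lemma prod {X : ι → V → α} {Y : ι → W → β} (hX : PosDep R X) (hY : PosDep R Y) :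
    PosDep R fun i (p : V × W) => (X i p.1, Y i p.2) := by
  intro G hG
  simp only [← univ_product_univ, expect_product]
  calc ∏ i, 𝔼 v, 𝔼 w, G i (X i v, Y i w)
      ≤ 𝔼 v, ∏ i, 𝔼 w, G i (X i v, Y i w) :=
        hX (fun i a => 𝔼 w, G i (a, Y i w)) fun i _ _ hab =>
          expect_le_expect fun w _ => hG i (Prod.mk_le_mk.mpr ⟨hab, le_rfl⟩)
    _ ≤ 𝔼 v, 𝔼 w, ∏ i, G i (X i v, Y i w) :=
        expect_le_expect fun v _ =>
          hY (fun i b => G i (X i v, b)) fun i _ _ hbc => hG i (Prod.mk_le_mk.mpr ⟨le_rfl, hbc⟩)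

lemma pi {E : Type*} [Finite E] {V α : E → Type*} [∀ e, Fintype (V e)] [Fintype (∀ e, V e)]
    [∀ e, Preorder (α e)] {X : ∀ e, ι → V e → α e} (hX : ∀ e, PosDep R (X e)) :
    PosDep R fun i (f : ∀ e, V e) e => X e i (f e) := by
  induction E using Finite.induction_empty_option with
  | @of_equiv E E' σ ih =>
    have := Fintype.ofEquiv _ (Equiv.piCongrLeft V σ).symm
    have hφ : Monotone (Equiv.piCongrLeft α σ) := by
      intro a b hab e'
      obtain ⟨e, rfl⟩ := σ.surjective e'
      simpa using hab e
    convert ((ih fun e => hX (σ e)).comp_equiv (Equiv.piCongrLeft V σ).symm).map hφ using 1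
    ext i f e'
    obtain ⟨e, rfl⟩ := σ.surjective e'
    simp
  | h_empty =>
    have : Nonempty (∀ e, V e) := ⟨PEmpty.rec⟩
    exact of_subsingleton _
  | @h_option E _ ih =>
    classical
    have hφ : Monotone (Equiv.piOptionEquivProd (β := α)).symm := by
      rintro a b hab (_ | e)
      exacts [hab.1, hab.2 e]
    convert (((hX none).prod (ih fun e => hX (some e))).comp_equiv
      Equiv.piOptionEquivProd).map hφ using 1
    ext i f (_ | e) <;> rfl

lemma prod_card_div_card_le {X : ι → V → α} (hX : PosDep R X) {s : ι → Set α}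
    (hs : ∀ i, IsLowerSet (s i)) [∀ i, DecidablePred (· ∈ s i)] :
    ∏ i, (#{v | X i v ∈ s i} : R) / Fintype.card V
      ≤ (#{v | ∀ i, X i v ∈ s i} : R) / Fintype.card V := by
  have hG (i : ι) : Antitone fun a => if a ∈ s i then (1 : R) else 0 := by
    intro a b hab
    by_cases hb : b ∈ s i
    · simp [hb, hs i hab hb]
    · simp only [hb, if_false]
      split_ifs <;> simp
  simpa [Fintype.expect_eq_sum_div_card, prod_ite_zero] using hX _ hG

end PosDep

end PositiveDependence

section Parity

/-- The nontrivial character of `Bool`, viewed as the group of order two. -/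
def boolSign (R : Type*) [Ring R] (b : Bool) : R :=
  (-1) ^ b.toNat

/-- The vector `v` of `k` bits followed by its parity bit, that is, the tuple of `k + 1` bits
with even sum that extends `v`. -/
def appendParity {k : ℕ} (v : Fin k → Bool) : Fin (k + 1) → Bool :=
  Fin.snoc v (decide (Odd #{j | v j = true}))

variable {R : Type*} {k : ℕ}

lemma boolSign_appendParity_last [CommRing R] (v : Fin k → Bool) :
    boolSign R (appendParity v (Fin.last k)) = ∏ j, boolSign R (v j) := by
  have sum_toNat : ∑ j, (v j).toNat = #{j | v j = true} := by
    simp only [card_filter, Bool.toNat, Bool.cond_eq_ite]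
  simp only [boolSign, appendParity, Fin.snoc_last, prod_pow_eq_pow_sum, sum_toNat]
  rcases Nat.even_or_odd #{j | v j = true} with h | h
  · simp [h.neg_one_pow, Nat.not_odd_iff_even.mpr h]
  · simp [h.neg_one_pow, h]

variable [Field R]

lemma expect_bool [CharZero R] (F : Bool → R) : 𝔼 b, F b = (F true + F false) / 2 := by
  rw [Fintype.expect_eq_sum_div_card, Fintype.sum_bool, Fintype.card_bool, Nat.cast_ofNat]

lemma eq_expect_add_boolSign_mul_expect [CharZero R] (F : Bool → R) (b : Bool) :
    F b = 𝔼 c, F c + boolSign R b * 𝔼 c, boolSign R c * F c := by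
  cases b <;> simp only [expect_bool, boolSign, Bool.toNat_true, Bool.toNat_false] <;> ring

lemma expect_boolSign_mul_nonneg [LinearOrder R] [IsStrictOrderedRing R] {F : Bool → R}
    (hF : Antitone F) : 0 ≤ 𝔼 b, boolSign R b * F b := by
  have := hF (Bool.false_le true)
  simp only [expect_bool, boolSign, Bool.toNat_true, Bool.toNat_false]
  linarith

lemma prod_expect [CharZero R] {ι : Type*} [Fintype ι] [DecidableEq ι] {κ : ι → Type*}
    [∀ i, Fintype (κ i)] (F : ∀ i, κ i → R) :
    ∏ i, 𝔼 b, F i b = 𝔼 v : ∀ i, κ i, ∏ i, F i (v i) := by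
  simp only [Fintype.expect_eq_sum_div_card, prod_div_distrib, Fintype.prod_sum, Fintype.card_pi,
    Nat.cast_prod]

/-- Poisson summation over the subgroup of vectors with even sum. -/
lemma expect_prod_appendParity [CharZero R] (G : Fin (k + 1) → Bool → R) :
    𝔼 v : Fin k → Bool, ∏ i, G i (appendParity v i)
      = ∏ i, 𝔼 b, G i b + ∏ i, 𝔼 b, boolSign R b * G i b := by
  have expand (v : Fin k → Bool) : ∏ i, G i (appendParity v i)
      = (∏ j : Fin k, G j.castSucc (v j)) * 𝔼 b, G (Fin.last k) b
        + (∏ j : Fin k, boolSign R (v j) * G j.castSucc (v j))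
          * 𝔼 b, boolSign R b * G (Fin.last k) b := by
    rw [Fin.prod_univ_castSucc, eq_expect_add_boolSign_mul_expect (G (Fin.last k)),
      boolSign_appendParity_last, prod_mul_distrib]
    simp only [appendParity, Fin.snoc_castSucc]
    ring
  simp only [expand, expect_add_distrib, ← expect_mul]
  rw [Fin.prod_univ_castSucc, Fin.prod_univ_castSucc, prod_expect, prod_expect]

lemma expect_appendParity [CharZero R] (hk : 1 ≤ k) (i : Fin (k + 1)) (F : Bool → R) :
    𝔼 v : Fin k → Bool, F (appendParity v i) = 𝔼 b, F b := by
  have : Nontrivial (Fin (k + 1)) := Fin.nontrivial_iff_two_le.mpr (by omega)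
  obtain ⟨j, hj⟩ := exists_ne i
  have sign_factor_eq_zero :
      ∏ l, 𝔼 b, boolSign R b * (Pi.mulSingle i F : Fin (k + 1) → Bool → R) l b = 0 :=
    prod_eq_zero (mem_univ j) (by rw [Pi.mulSingle_eq_of_ne hj, expect_bool]; simp [boolSign])
  have h := expect_prod_appendParity (Pi.mulSingle i F : Fin (k + 1) → Bool → R)
  rw [sign_factor_eq_zero, add_zero] at h
  convert h using 1
  · refine expect_congr rfl fun v _ => ?_
    rw [Fintype.prod_eq_single i fun l hl => by simp [hl], Pi.mulSingle_eq_same]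
  · rw [Fintype.prod_eq_single i fun l hl => by simp [hl], Pi.mulSingle_eq_same]

lemma posDep_appendParity [LinearOrder R] [IsStrictOrderedRing R] (hk : 1 ≤ k) :
    PosDep R fun i (v : Fin k → Bool) => appendParity v i := by
  intro G hG
  simp only [expect_appendParity hk, expect_prod_appendParity]
  exact le_add_of_nonneg_right (prod_nonneg fun i _ => expect_boolSign_mul_nonneg (hG i))

end Parity

section RandomSubsets

variable {E : Type*} [Fintype E] [DecidableEq E] {k : ℕ}

lemma Ssub_eq_filter_appendParity (f : E → Fin k → Bool) (i : Fin (k + 1)) :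
    Ssub f i = ({e | appendParity (f e) i = true} : Finset E) := by
  cases i using Fin.lastCases <;> simp [Ssub, appendParity]

lemma posDep_Ssub {R : Type*} [Field R] [LinearOrder R] [IsStrictOrderedRing R] (hk : 1 ≤ k) :
    PosDep R fun i (f : E → Fin k → Bool) => Ssub f i := by
  have monotone_support : Monotone fun s : E → Bool => ({e | s e = true} : Finset E) :=
    fun s t hst => monotone_filter_right _ fun e _ he => hst e he
  simp only [Ssub_eq_filter_appendParity]
  exact (PosDep.pi fun _ : E => posDep_appendParity (R := R) hk).map monotone_support

end RandomSubsets

/-- For `k` independent uniform random subsets `S_1, …, S_k` of a finite set `E` together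
with their mod-2 sum `S_{k+1}`, and closed downward families `𝒳_1, …, 𝒳_{k+1}`:
`P(S_1 ∈ 𝒳_1, …, S_{k+1} ∈ 𝒳_{k+1}) ≥ P(S_1 ∈ 𝒳_1) ⋯ P(S_{k+1} ∈ 𝒳_{k+1})`. -/
theorem multi_percolation_downward_pos_dep (E : Type*) [Fintype E] [DecidableEq E]
    (k : ℕ) (hk : 1 ≤ k) (𝒳 : Fin (k + 1) → Finset (Finset E))
    (hX : ∀ i, ∀ A ∈ 𝒳 i, ∀ B : Finset E, B ⊆ A → B ∈ 𝒳 i) :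
    ((Finset.univ.filter
        (fun f : E → (Fin k → Bool) => ∀ i, Ssub f i ∈ 𝒳 i)).card : ℚ)
        / 2 ^ (k * Fintype.card E)
      ≥ ∏ i : Fin (k + 1),
          ((Finset.univ.filter
            (fun f : E → (Fin k → Bool) => Ssub f i ∈ 𝒳 i)).card : ℚ)
            / 2 ^ (k * Fintype.card E) := by
  have lower (i : Fin (k + 1)) : IsLowerSet (𝒳 i : Set (Finset E)) :=
    fun A B hBA hA => hX i A hA B hBA
  have card_sample : (Fintype.card (E → Fin k → Bool) : ℚ) = 2 ^ (k * Fintype.card E) := by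
    simp [pow_mul]
  rw [← card_sample]
  simpa only [mem_coe] using (posDep_Ssub (R := ℚ) hk).prod_card_div_card_le lower
end

section
/- Let E be a finite set and let f : E → {1,2,3,4,5,6,7,8} be a uniformly random coloring. For a set S of colors write E_S(f) := f⁻¹(S). Then for any closed downward families 𝒰, 𝒱, 𝒲, 𝒳 of subsets of E, P(E_{{1,2,3,4}}(f) ∈ 𝒰 and E_{{1,2,5,6}}(f) ∈ 𝒱 and E_{{1,3,5,7}}(f) ∈ 𝒲 and E_{{1,4,6,7}}(f) ∈ 𝒳) ≥ P(E_{{1,2,3,4}}(f) ∈ 𝒰) · P(E_{{1,2,5,6}}(f) ∈ 𝒱) · P(E_{{1,3,5,7}}(f) ∈ 𝒲) · P(E_{{1,4,6,7}}(f) ∈ 𝒳). -/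
open Finset

/-- `ES f S` is the set of elements whose color under `f` lies in the color set `S`.
Colors `{1,…,8}` are represented by `Fin 8 = {0,…,7}`. -/
def ES {E : Type*} [Fintype E] [DecidableEq E] (f : E → Fin 8) (S : Finset (Fin 8)) :
    Finset E :=
  Finset.univ.filter (fun e => f e ∈ S)

open scoped BigOperators

/-! If `X` and `Y` satisfy the product inequality for nonnegative decreasing functions, then so does
the independent pair `(X, Y)`: average over `Y` first, then over `X`. By induction on the elements
of `E`, it is enough to treat the color of a single element. There, every function of the event
`c ∈ S j` is affine in its indicator, so the expectation of the product expands into mixed moments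
of the centred indicators, with nonnegative coefficients; the empty moment contributes the product
of the expectations, and nonnegativity of the other moments gives the inequality. -/

/-- Positive dependence of a family of random elements `X j` of preorders, defined on the
finite set `C` with its uniform probability: nonnegative decreasing functions of the `X j`, one
for each `j`, satisfy the product inequality. For indicators of lower sets this bounds the
probability of a joint event from below by the product of the marginal probabilities. The field
`𝕜` is the one in which the functions take their values. -/
def DownwardPosDep (𝕜 : Type*) [Field 𝕜] [LinearOrder 𝕜] [IsStrictOrderedRing 𝕜]
    {J C : Type*} [Fintype J] [Fintype C] {L : J → Type*} [∀ j, Preorder (L j)]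
    (X : ∀ j, C → L j) : Prop :=
  ∀ g : ∀ j, L j → 𝕜, (∀ j, Antitone (g j)) → (∀ j x, 0 ≤ g j x) →
    ∏ j, 𝔼 c, g j (X j c) ≤ 𝔼 c, ∏ j, g j (X j c)

/-- The centred indicator of the event `c ∉ S` for a uniformly random `c`. The complement of `S`
is used because a decreasing function of the truth value of `c ∈ S` is then a constant plus a
nonnegative multiple of the centred indicator. -/
def centeredAvoid (𝕜 : Type*) [Field 𝕜] {C : Type*} [Fintype C] [DecidableEq C]
    (S : Finset C) (c : C) : 𝕜 :=
  (S.dens : 𝕜) - if c ∈ S then 1 else 0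

section CenteredAvoid

variable {𝕜 : Type*} [Field 𝕜] [CharZero 𝕜] {C : Type*} [Fintype C] [DecidableEq C]

lemma expect_apply_decide_mem [Nonempty C] (S : Finset C) (g : Bool → 𝕜) :
    𝔼 c, g (decide (c ∈ S)) = g false - (g false - g true) * S.dens := by
  have affine (c : C) :
      g (decide (c ∈ S)) = g false - (g false - g true) * if c ∈ S then 1 else 0 := by
    split_ifs with hc <;> simp [hc]
  have expect_indicator : 𝔼 c, (if c ∈ S then 1 else 0 : 𝕜) = S.dens := by
    simp [Fintype.expect_eq_sum_div_card, nnratCast_dens]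
  simp only [affine, expect_sub_distrib, ← mul_expect, expect_indicator, Fintype.expect_const]

lemma apply_decide_mem_eq_mul_centeredAvoid_add_expect (S : Finset C) (g : Bool → 𝕜) (c : C) :
    g (decide (c ∈ S)) =
      (g false - g true) * centeredAvoid 𝕜 S c + 𝔼 c', g (decide (c' ∈ S)) := by
  have : Nonempty C := ⟨c⟩
  rw [expect_apply_decide_mem, centeredAvoid]
  split_ifs with hc <;> simp only [hc, decide_true, decide_false] <;> ring

end CenteredAvoid

namespace DownwardPosDep

variable {𝕜 : Type*} [Field 𝕜] [LinearOrder 𝕜] [IsStrictOrderedRing 𝕜]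
  {J C D : Type*} [Fintype J] [Fintype C] [Fintype D]
  {L M : J → Type*} [∀ j, Preorder (L j)] [∀ j, Preorder (M j)]
  {X : ∀ j, C → L j} {Y : ∀ j, D → M j}

theorem prod_dens_le_dens (hX : DownwardPosDep 𝕜 X) {𝒜 : ∀ j, Set (L j)}
    [∀ j, DecidablePred (· ∈ 𝒜 j)] (h𝒜 : ∀ j, IsLowerSet (𝒜 j)) :
    ∏ j, ({c | X j c ∈ 𝒜 j} : Finset C).dens ≤ ({c | ∀ j, X j c ∈ 𝒜 j} : Finset C).dens := by
  have antitone_indicator (j : J) : Antitone fun x ↦ if x ∈ 𝒜 j then (1 : 𝕜) else 0 := by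
    intro x y hxy
    have : y ∈ 𝒜 j → x ∈ 𝒜 j := h𝒜 j hxy
    grind
  have key := hX (fun j x ↦ if x ∈ 𝒜 j then 1 else 0) antitone_indicator
    fun j x ↦ by split_ifs <;> simp
  simp only [Fintype.expect_eq_sum_div_card, Fintype.prod_boole, sum_boole,
    ← nnratCast_dens] at key
  exact_mod_cast key

lemma of_unique [Unique C] (X : ∀ j, C → L j) : DownwardPosDep 𝕜 X :=
  fun g _ _ ↦ by simp

lemma of_equiv (hX : DownwardPosDep 𝕜 X) (σ : D ≃ C) (φ : ∀ j, L j → M j)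
    (hφ : ∀ j, Monotone (φ j)) (hY : ∀ j d, Y j d = φ j (X j (σ d))) : DownwardPosDep 𝕜 Y := by
  intro g hg hg₀
  have expect_comp (F : C → 𝕜) : 𝔼 d, F (σ d) = 𝔼 c, F c :=
    Fintype.expect_equiv σ _ _ fun _ ↦ rfl
  have key := hX (fun j ↦ g j ∘ φ j) (fun j ↦ (hg j).comp_monotone (hφ j)) fun j _ ↦ hg₀ j _
  simp only [← expect_comp, Function.comp_apply] at key
  simpa only [hY] using key

theorem prod (hX : DownwardPosDep 𝕜 X) (hY : DownwardPosDep 𝕜 Y) :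
    DownwardPosDep 𝕜 fun j (p : C × D) ↦ (X j p.1, Y j p.2) := by
  intro g hg hg₀
  calc ∏ j, 𝔼 p : C × D, g j (X j p.1, Y j p.2)
      = ∏ j, 𝔼 c, 𝔼 d, g j (X j c, Y j d) :=
        Finset.prod_congr rfl fun j _ ↦ expect_product univ univ _
    _ ≤ 𝔼 c, ∏ j, 𝔼 d, g j (X j c, Y j d) :=
        hX (fun j x ↦ 𝔼 d, g j (x, Y j d))
          (fun j _ _ hx ↦ expect_le_expect fun _ _ ↦ hg j ⟨hx, le_rfl⟩)
          fun j _ ↦ expect_nonneg fun _ _ ↦ hg₀ j _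
    _ ≤ 𝔼 c, 𝔼 d, ∏ j, g j (X j c, Y j d) :=
        expect_le_expect fun c _ ↦ hY (fun j y ↦ g j (X j c, y))
          (fun j _ _ hy ↦ hg j ⟨le_rfl, hy⟩) fun j _ ↦ hg₀ j _
    _ = 𝔼 p : C × D, ∏ j, g j (X j p.1, Y j p.2) :=
        (expect_product univ univ fun p : C × D ↦ ∏ j, g j (X j p.1, Y j p.2)).symm

lemma pi_fin {n : ℕ} {C : Fin n → Type*} [∀ i, Fintype (C i)] {L : J → Fin n → Type*}
    [∀ j i, Preorder (L j i)] {X : ∀ i j, C i → L j i} (hX : ∀ i, DownwardPosDep 𝕜 (X i)) :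
    DownwardPosDep 𝕜 fun j (f : ∀ i, C i) i ↦ X i j (f i) := by
  induction n with
  | zero => exact of_unique _
  | succ n ih =>
    refine ((hX 0).prod (ih fun i ↦ hX i.succ)).of_equiv (Fin.consEquiv C).symm
      (fun j ↦ Fin.consOrderIso (L j)) (fun j ↦ (Fin.consOrderIso (L j)).monotone) fun j f ↦ ?_
    exact (Fin.cons_self_tail fun i ↦ X i j (f i)).symm

theorem pi {E : Type*} [Fintype E] [DecidableEq E] {C : E → Type*} [∀ e, Fintype (C e)]
    {L : J → E → Type*} [∀ j e, Preorder (L j e)] {X : ∀ e j, C e → L j e}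
    (hX : ∀ e, DownwardPosDep 𝕜 (X e)) :
    DownwardPosDep 𝕜 fun j (f : ∀ e, C e) e ↦ X e j (f e) := by
  let σ := (Fintype.equivFin E).symm
  refine (pi_fin fun i ↦ hX (σ i)).of_equiv (Equiv.piCongrLeft C σ).symm
    (fun j ↦ Equiv.piCongrLeft (L j) σ) (fun j x y hxy ↦ ?_) fun j f ↦ ?_
  · refine σ.surjective.forall.2 fun i ↦ ?_
    simpa only [Equiv.piCongrLeft_apply_apply] using hxy i
  · refine funext (σ.surjective.forall.2 fun i ↦ ?_)
    rw [Equiv.piCongrLeft_apply_apply]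
    rfl

theorem of_moments_nonneg [DecidableEq C] [Nonempty C] {S : J → Finset C}
    (hS : ∀ T : Finset J, 0 ≤ 𝔼 c, ∏ j ∈ T, centeredAvoid 𝕜 (S j) c) :
    DownwardPosDep 𝕜 fun j c ↦ decide (c ∈ S j) := by
  classical
  intro g hg hg₀
  let mean (j : J) : 𝕜 := 𝔼 c, g j (decide (c ∈ S j))
  let drop (j : J) : 𝕜 := g j false - g j true
  let moment (T : Finset J) : 𝕜 := 𝔼 c, ∏ j ∈ T, centeredAvoid 𝕜 (S j) c
  have mean_nonneg (j : J) : 0 ≤ mean j := expect_nonneg fun _ _ ↦ hg₀ j _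
  have drop_nonneg (j : J) : 0 ≤ drop j := sub_nonneg.2 <| hg j <| Bool.false_le true
  have summand_nonneg (T : Finset J) : 0 ≤ (∏ j ∈ T, drop j) * moment T * ∏ j ∈ Tᶜ, mean j :=
    mul_nonneg (mul_nonneg (prod_nonneg fun j _ ↦ drop_nonneg j) (hS T))
      (prod_nonneg fun j _ ↦ mean_nonneg j)
  calc ∏ j, mean j
      = (∏ j ∈ ∅, drop j) * moment ∅ * ∏ j ∈ ∅ᶜ, mean j := by simp [moment]
    _ ≤ ∑ T, (∏ j ∈ T, drop j) * moment T * ∏ j ∈ Tᶜ, mean j :=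
        single_le_sum (fun T _ ↦ summand_nonneg T) (mem_univ ∅)
    _ = 𝔼 c, ∏ j, (drop j * centeredAvoid 𝕜 (S j) c + mean j) := by
        simp only [Fintype.prod_add, prod_mul_distrib, expect_sum_comm, mul_expect, expect_mul,
          moment]
    _ = 𝔼 c, ∏ j, g j (decide (c ∈ S j)) :=
        expect_congr rfl fun c _ ↦ Finset.prod_congr rfl fun j _ ↦
          (apply_decide_mem_eq_mul_centeredAvoid_add_expect (S j) (g j) c).symm

end DownwardPosDep

theorem eight_color_downward_pos_dep_general {E C J : Type*} [Fintype E] [DecidableEq E]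
    [Fintype C] [DecidableEq C] [Nonempty C] [Fintype J] {S : J → Finset C}
    (hS : ∀ T : Finset J, 0 ≤ 𝔼 c, ∏ j ∈ T, centeredAvoid ℚ (S j) c)
    {𝒜 : J → Finset (Finset E)} (h𝒜 : ∀ j, IsLowerSet (𝒜 j : Set (Finset E))) :
    ∏ j, ({f | ({e | f e ∈ S j} : Finset E) ∈ 𝒜 j} : Finset (E → C)).dens ≤
      ({f | ∀ j, ({e | f e ∈ S j} : Finset E) ∈ 𝒜 j} : Finset (E → C)).dens := by
  classical
  let trueSet (x : E → Bool) : Finset E := {e | x e}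
  have trueSet_mono : Monotone trueSet := fun x y hxy ↦ monotone_filter_right _ fun e _ ↦ hxy e
  have colorings_posDep := DownwardPosDep.pi fun _ : E ↦ DownwardPosDep.of_moments_nonneg hS
  simpa [trueSet] using colorings_posDep.prod_dens_le_dens fun j ↦ (h𝒜 j).preimage trueSet_mono

/-- The four color classes that define the percolations, with the colors `1, …, 8` shifted to
`0, …, 7`. -/
def eightColorClass : Fin 4 → Finset (Fin 8) :=
  ![{0, 1, 2, 3}, {0, 1, 4, 5}, {0, 2, 4, 6}, {0, 3, 5, 6}]

/-- The first three signs are independent and the fourth is their product, since every color lies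
in an even number of the four classes. -/
lemma sum_prod_sign_eightColorClass (T : Finset (Fin 4)) :
    ∑ c, ∏ j ∈ T, (if c ∈ eightColorClass j then -1 else 1 : ℤ) =
      if T = ∅ ∨ T = univ then 8 else 0 := by
  decide +revert

lemma centeredAvoid_eightColorClass (j : Fin 4) (c : Fin 8) :
    centeredAvoid ℚ (eightColorClass j) c =
      1 / 2 * (if c ∈ eightColorClass j then -1 else 1 : ℤ) := by
  have card_eq : #(eightColorClass j) = 4 := by decide +revert
  rw [centeredAvoid, nnratCast_dens, card_eq]
  split_ifs <;> norm_num

lemma expect_prod_centeredAvoid_eightColorClass_nonneg (T : Finset (Fin 4)) :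
    0 ≤ 𝔼 c, ∏ j ∈ T, centeredAvoid ℚ (eightColorClass j) c := by
  have sign_moment_nonneg : 0 ≤ ∑ c, ∏ j ∈ T, (if c ∈ eightColorClass j then -1 else 1 : ℤ) := by
    rw [sum_prod_sign_eightColorClass]
    split_ifs <;> norm_num
  simp only [centeredAvoid_eightColorClass, prod_mul_distrib, ← mul_expect,
    Fintype.expect_eq_sum_div_card, ← Int.cast_prod, ← Int.cast_sum]
  have := Int.cast_nonneg (R := ℚ) sign_moment_nonneg
  positivity

/-- For a uniformly random 8-coloring of a finite set `E` and closed downward families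
`𝒰, 𝒱, 𝒲, 𝒳`, with the four pairwise independent ½-percolations `E_{1234}`, `E_{1256}`,
`E_{1357}`, `E_{1467}` (colors shifted to `{0,…,7}`):
`P(𝒰 ∩ 𝒱 ∩ 𝒲 ∩ 𝒳) ≥ P(𝒰) · P(𝒱) · P(𝒲) · P(𝒳)`. -/
theorem eight_color_downward_pos_dep (E : Type*) [Fintype E] [DecidableEq E]
    (𝒰 𝒱 𝒲 𝒳 : Finset (Finset E))
    (hU : ∀ A ∈ 𝒰, ∀ B : Finset E, B ⊆ A → B ∈ 𝒰)
    (hV : ∀ A ∈ 𝒱, ∀ B : Finset E, B ⊆ A → B ∈ 𝒱)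
    (hW : ∀ A ∈ 𝒲, ∀ B : Finset E, B ⊆ A → B ∈ 𝒲)
    (hX : ∀ A ∈ 𝒳, ∀ B : Finset E, B ⊆ A → B ∈ 𝒳) :
    ((Finset.univ.filter (fun f : E → Fin 8 =>
        ES f {0, 1, 2, 3} ∈ 𝒰 ∧ ES f {0, 1, 4, 5} ∈ 𝒱 ∧
        ES f {0, 2, 4, 6} ∈ 𝒲 ∧ ES f {0, 3, 5, 6} ∈ 𝒳)).card : ℚ)
        / 8 ^ Fintype.card E
      ≥ (((Finset.univ.filter (fun f : E → Fin 8 => ES f {0, 1, 2, 3} ∈ 𝒰)).card : ℚ)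
            / 8 ^ Fintype.card E)
        * (((Finset.univ.filter (fun f : E → Fin 8 => ES f {0, 1, 4, 5} ∈ 𝒱)).card : ℚ)
            / 8 ^ Fintype.card E)
        * (((Finset.univ.filter (fun f : E → Fin 8 => ES f {0, 2, 4, 6} ∈ 𝒲)).card : ℚ)
            / 8 ^ Fintype.card E)
        * (((Finset.univ.filter (fun f : E → Fin 8 => ES f {0, 3, 5, 6} ∈ 𝒳)).card : ℚ)
            / 8 ^ Fintype.card E) := by
  have h𝒜 (j : Fin 4) : IsLowerSet (![𝒰, 𝒱, 𝒲, 𝒳] j : Set (Finset E)) := fun A B hBA hA ↦ by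
    fin_cases j
    exacts [hU A hA B hBA, hV A hA B hBA, hW A hA B hBA, hX A hA B hBA]
  have key := NNRat.cast_le (K := ℚ) |>.2 <| eight_color_downward_pos_dep_general
    expect_prod_centeredAvoid_eightColorClass_nonneg h𝒜
  simpa [Fin.prod_univ_four, Fin.forall_fin_succ, nnratCast_dens, eightColorClass, ES] using key
end

section
/- Let E be a finite set and let f : E → {a,b,c,d} be a uniformly random coloring. For any closed upward family 𝒰 of subsets of E, writing 𝒰_{st} for the event {E_{st}(f) ∈ 𝒰} and P_{1/2}(𝒰) := |𝒰| / 2^{|E|}, one has P_{1/2}(𝒰)^3 ≤ P(𝒰_{ab} ∩ 𝒰_{ac} ∩ 𝒰_{ad}) ≤ P_{1/2}(𝒰)^2. -/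
open Finset

/-!
The sets `E_ab` and `E_ac` of a uniformly random coloring are independent and uniform, and `E_ad` is
the complement of their symmetric difference. Forgetting `E_ad` gives the upper bound. The lower
bound says that increasing events of these three sets are positively correlated, although `E_ad` is
not a monotone function of the other two. It holds more generally for increasing functions `u`, `v`,
`w` of the three sets, by induction on `|E|`: writing `u₀`, `u₁` for the values of `u` without and
with a given element, the two sides of the inequality for that element alone differ by the product
`(u₁ - u₀) * (v₁ - v₀) * (w₁ - w₀) ≥ 0` of the increments.
-/

open scoped symmDiff

section SymmDiff

variable {E : Type*} [DecidableEq E] {A B : Finset E} {e : E}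

theorem insert_symmDiff_of_notMem (hB : e ∉ B) : insert e A ∆ B = insert e (A ∆ B) := by
  ext x
  by_cases hx : x = e <;> simp [mem_symmDiff, hx, hB]

theorem insert_symmDiff_insert (hA : e ∉ A) (hB : e ∉ B) : insert e A ∆ insert e B = A ∆ B := by
  ext x
  by_cases hx : x = e <;> simp [mem_symmDiff, hx, hA, hB]

end SymmDiff

section CommRing

variable {R : Type*} [CommRing R] [PartialOrder R] [IsOrderedRing R]

/- The terms `uᵢ * vⱼ * wₖ` on the right are those with `k = 1` exactly when `i = j`: an element
belongs to `E_ad` if and only if it belongs to both or neither of `E_ab` and `E_ac`. -/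
theorem add_mul_add_mul_add_le_two_mul {u₀ u₁ v₀ v₁ w₀ w₁ : R}
    (hu : u₀ ≤ u₁) (hv : v₀ ≤ v₁) (hw : w₀ ≤ w₁) :
    (u₀ + u₁) * (v₀ + v₁) * (w₀ + w₁) ≤
      2 * (u₀ * v₀ * w₁ + u₀ * v₁ * w₀ + (u₁ * v₀ * w₀ + u₁ * v₁ * w₁)) := by
  have increments : 0 ≤ (u₁ - u₀) * (v₁ - v₀) * (w₁ - w₀) :=
    mul_nonneg (mul_nonneg (sub_nonneg.2 hu) (sub_nonneg.2 hv)) (sub_nonneg.2 hw)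
  rw [← sub_nonneg]
  convert increments using 1
  ring

variable {E : Type*} [DecidableEq E]

theorem sum_mul_sum_mul_sum_le_sum_sdiff_symmDiff (s : Finset E)
    {u v w : Finset E → R} (hu : Monotone u) (hv : Monotone v) (hw : Monotone w) :
    (∑ A ∈ s.powerset, u A) * (∑ A ∈ s.powerset, v A) * (∑ A ∈ s.powerset, w A) ≤
      2 ^ #s * ∑ A ∈ s.powerset, ∑ B ∈ s.powerset, u A * v B * w (s \ A ∆ B) := by
  induction s using Finset.induction_on generalizing u v w with
  | empty => simp
  | insert e s he ih =>
    have monotone_add_insert {g : Finset E → R} (hg : Monotone g) :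
        Monotone fun A ↦ g A + g (insert e A) :=
      fun A B h ↦ add_le_add (hg h) (hg (insert_subset_insert e h))
    simp only [sum_powerset_insert he, ← sum_add_distrib, card_insert_of_notMem he, pow_succ,
      mul_assoc (2 ^ #s : R)]
    refine (ih (monotone_add_insert hu) (monotone_add_insert hv) (monotone_add_insert hw)).trans ?_
    refine mul_le_mul_of_nonneg_left ?_ (pow_nonneg zero_le_two _)
    rw [mul_sum]
    refine sum_le_sum fun A hA ↦ ?_
    rw [mul_sum]
    refine sum_le_sum fun B hB ↦ ?_
    have heA : e ∉ A := fun h ↦ he (mem_powerset.1 hA h)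
    have heB : e ∉ B := fun h ↦ he (mem_powerset.1 hB h)
    have heAB : e ∉ A ∆ B := by simp [mem_symmDiff, heA, heB]
    have sdiff_insert_symmDiff : insert e s \ insert e (A ∆ B) = s \ A ∆ B := by
      rw [insert_sdiff_insert, sdiff_insert_of_notMem he]
    rw [insert_symmDiff_insert heA heB, insert_symmDiff_of_notMem heB, symmDiff_comm A (insert e B),
      insert_symmDiff_of_notMem heA, symmDiff_comm B A, sdiff_insert_symmDiff,
      insert_sdiff_of_notMem s heAB]
    exact add_mul_add_mul_add_le_two_mul (hu (subset_insert e A)) (hv (subset_insert e B))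
      (hw (subset_insert e _))

end CommRing

section Families

variable {E : Type*} [Fintype E] [DecidableEq E] {𝒰 𝒱 𝒲 : Finset (Finset E)}

theorem card_mul_card_mul_card_le_card_filter_bihimp (h𝒰 : IsUpperSet (𝒰 : Set (Finset E)))
    (h𝒱 : IsUpperSet (𝒱 : Set (Finset E))) (h𝒲 : IsUpperSet (𝒲 : Set (Finset E))) :
    #𝒰 * #𝒱 * #𝒲 ≤ 2 ^ Fintype.card E * #{p ∈ 𝒰 ×ˢ 𝒱 | p.1 ⇔ p.2 ∈ 𝒲} := by
  have monotone_indicator {𝒜 : Finset (Finset E)} (h𝒜 : IsUpperSet (𝒜 : Set (Finset E))) :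
      Monotone fun A ↦ if A ∈ 𝒜 then (1 : ℤ) else 0 := by
    intro A B hAB
    have : A ∈ 𝒜 → B ∈ 𝒜 := h𝒜 hAB
    grind
  have correlation := sum_mul_sum_mul_sum_le_sum_sdiff_symmDiff univ
    (monotone_indicator h𝒰) (monotone_indicator h𝒱) (monotone_indicator h𝒲)
  have card_eq_sum : (#{p ∈ 𝒰 ×ˢ 𝒱 | p.1 ⇔ p.2 ∈ 𝒲} : ℤ) =
      ∑ A, ∑ B, (if A ∈ 𝒰 then 1 else 0) * (if B ∈ 𝒱 then 1 else 0) *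
        (if univ \ A ∆ B ∈ 𝒲 then 1 else 0) := by
    simp only [natCast_card_filter, sum_product, ← compl_symmDiff, compl_eq_univ_sdiff, ite_mul,
      one_mul, zero_mul, sum_ite_irrel, sum_const_zero, sum_ite_mem, univ_inter]
  rw [powerset_univ, ← card_eq_sum, card_univ] at correlation
  simp only [sum_boole, filter_univ_mem] at correlation
  exact mod_cast correlation

theorem Est_zero_three (f : E → Fin 4) : Est f 0 3 = Est f 0 1 ⇔ Est f 0 2 := by
  ext e
  simp only [← compl_symmDiff, Est, mem_compl, mem_symmDiff, mem_filter_univ]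
  generalize f e = i
  decide +revert

theorem bijective_Est_zero_one_Est_zero_two :
    Function.Bijective fun f : E → Fin 4 ↦ (Est f 0 1, Est f 0 2) := by
  constructor
  · intro f g h
    simp only [Prod.mk.injEq, Finset.ext_iff, Est, mem_filter_univ] at h
    funext e
    have h₁ := h.1 e
    have h₂ := h.2 e
    generalize f e = i, g e = j at h₁ h₂ ⊢
    decide +revert
  · rintro ⟨A, B⟩
    refine ⟨fun e ↦ if e ∈ A then if e ∈ B then 0 else 1 else if e ∈ B then 2 else 3, ?_⟩
    ext e <;> by_cases hA : e ∈ A <;> by_cases hB : e ∈ B <;> simp [Est, hA, hB]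

theorem card_filter_Est (𝒰 𝒱 𝒲 : Finset (Finset E)) :
    #{f : E → Fin 4 | Est f 0 1 ∈ 𝒰 ∧ Est f 0 2 ∈ 𝒱 ∧ Est f 0 3 ∈ 𝒲} =
      #{p ∈ 𝒰 ×ˢ 𝒱 | p.1 ⇔ p.2 ∈ 𝒲} :=
  card_bijective _ bijective_Est_zero_one_Est_zero_two fun f ↦ by simp [Est_zero_three, and_assoc]

theorem colored_percolation_sandwich_general (h𝒰 : IsUpperSet (𝒰 : Set (Finset E)))
    (h𝒱 : IsUpperSet (𝒱 : Set (Finset E))) (h𝒲 : IsUpperSet (𝒲 : Set (Finset E))) :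
    (#𝒰 / 2 ^ Fintype.card E : ℚ) * (#𝒱 / 2 ^ Fintype.card E) * (#𝒲 / 2 ^ Fintype.card E) ≤
        #{f : E → Fin 4 | Est f 0 1 ∈ 𝒰 ∧ Est f 0 2 ∈ 𝒱 ∧ Est f 0 3 ∈ 𝒲} / 4 ^ Fintype.card E ∧
      (#{f : E → Fin 4 | Est f 0 1 ∈ 𝒰 ∧ Est f 0 2 ∈ 𝒱 ∧ Est f 0 3 ∈ 𝒲} / 4 ^ Fintype.card E : ℚ) ≤
        (#𝒰 / 2 ^ Fintype.card E) * (#𝒱 / 2 ^ Fintype.card E) := by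
  have lower := card_mul_card_mul_card_le_card_filter_bihimp h𝒰 h𝒱 h𝒲
  have upper := card_filter_le (𝒰 ×ˢ 𝒱) fun p ↦ p.1 ⇔ p.2 ∈ 𝒲
  rw [card_product] at upper
  rw [← card_filter_Est] at lower upper
  have four_pow : (4 : ℚ) ^ Fintype.card E = 2 ^ Fintype.card E * 2 ^ Fintype.card E := by
    rw [← mul_pow]
    norm_num
  rw [four_pow, div_mul_div_comm, div_mul_div_comm]
  constructor
  · rw [← div_div, div_right_comm]
    gcongr
    rw [div_le_iff₀' (by positivity)]
    exact mod_cast lower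
  · gcongr
    exact mod_cast upper

end Families

/-- For a uniformly random 4-coloring of a finite set `E` and a closed upward family `𝒰`,
writing `P_{1/2}(𝒰) = |𝒰| / 2^{|E|}`:
`P_{1/2}(𝒰)^3 ≤ P(𝒰_{ab} ∩ 𝒰_{ac} ∩ 𝒰_{ad}) ≤ P_{1/2}(𝒰)^2`. -/
theorem colored_percolation_sandwich (E : Type*) [Fintype E] [DecidableEq E]
    (𝒰 : Finset (Finset E))
    (hU : ∀ A ∈ 𝒰, ∀ B : Finset E, A ⊆ B → B ∈ 𝒰) :
    ((𝒰.card : ℚ) / 2 ^ Fintype.card E) ^ 3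
      ≤ ((Finset.univ.filter (fun f : E → Fin 4 =>
            Est f 0 1 ∈ 𝒰 ∧ Est f 0 2 ∈ 𝒰 ∧ Est f 0 3 ∈ 𝒰)).card : ℚ)
          / 4 ^ Fintype.card E ∧
    ((Finset.univ.filter (fun f : E → Fin 4 =>
        Est f 0 1 ∈ 𝒰 ∧ Est f 0 2 ∈ 𝒰 ∧ Est f 0 3 ∈ 𝒰)).card : ℚ)
        / 4 ^ Fintype.card E
      ≤ ((𝒰.card : ℚ) / 2 ^ Fintype.card E) ^ 2 := by
  have h𝒰 : IsUpperSet (𝒰 : Set (Finset E)) := fun A B hAB hA ↦ hU A hA B hAB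
  simpa only [pow_three', sq] using colored_percolation_sandwich_general h𝒰 h𝒰 h𝒰
end

section
/- For each m ≥ 0 let E_m be a finite set with |E_m| = 2m+1, let f : E_m → {a,b,c,d} be a uniformly random coloring, and let 𝒰_m := {A ⊆ E_m : |A| > m} be the majority family. Then the probability P(|E_{ab}(f)| > m and |E_{ac}(f)| > m and |E_{bc}(f)| > m) converges to 1/8 as m → ∞. -/
open Finset

/-! Identify the colors `a, b, c, d` with `(1, 1), (1, 0), (0, 1), (0, 0)` in `𝔽₂ × 𝔽₂`. A random
coloring becomes a pair of independent uniform vectors `x, y ∈ 𝔽₂ ^ E`, and `E_ab`, `E_ac`, `E_bc`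
become the supports of `x`, `y` and `x + y`. So the probability is the density of pairs
`(x, y) ∈ A × A` with `x + y ∈ A`, where `A` is the majority family, which has density `1 / 2`. By
Fourier analysis on `𝔽₂ ^ E`, this density differs from `(1 / 2) ^ 3` by at most half of the largest
nontrivial normalised Fourier coefficient of `A`. Such a coefficient is at most the probability that
a given element is pivotal for the majority vote, which is of order `m ^ (-1 / 2)`. -/

section FourierAnalysis

open scoped ComplexConjugate

variable {G : Type*} [AddCommGroup G] [Fintype G]

/-- The unnormalised Fourier transform on a finite abelian group, as a function on its characters.
The character is not conjugated. -/
noncomputable def charSum (f : G → ℂ) (χ : AddChar G ℂ) : ℂ := ∑ x, f x * χ x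

lemma charSum_zero (f : G → ℂ) : charSum f 0 = ∑ x, f x := by
  simp [charSum]

lemma charSum_ite_mem [DecidableEq G] (A : Finset G) (χ : AddChar G ℂ) :
    charSum (fun x ↦ if x ∈ A then 1 else 0) χ = ∑ x ∈ A, χ x := by
  simp [charSum]

lemma charSum_convolution (f g : G → ℂ) (χ : AddChar G ℂ) :
    charSum (fun z ↦ ∑ y, f (z - y) * g y) χ = charSum f χ * charSum g χ := by
  calc charSum (fun z ↦ ∑ y, f (z - y) * g y) χ
      = ∑ y, ∑ z, f (z - y) * g y * χ z := by
        simp_rw [charSum, sum_mul]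
        exact sum_comm
    _ = ∑ y, ∑ x, f x * g y * χ (x + y) :=
        sum_congr rfl fun y _ ↦ Fintype.sum_equiv (Equiv.subRight y) _ _ (by simp)
    _ = charSum f χ * charSum g χ := by
        rw [charSum, charSum, sum_mul_sum, sum_comm]
        simp_rw [AddChar.map_add_eq_mul, mul_mul_mul_comm]

lemma sum_charSum_mul_conj (f g : G → ℂ) :
    ∑ χ, charSum f χ * conj (charSum g χ) = Fintype.card G * ∑ x, f x * conj (g x) := by
  classical
  calc ∑ χ, charSum f χ * conj (charSum g χ)
      = ∑ χ : AddChar G ℂ, ∑ x, ∑ y, f x * conj (g y) * χ (x - y) := by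
        refine sum_congr rfl fun χ _ ↦ ?_
        simp_rw [charSum, map_sum, sum_mul_sum, map_mul, sub_eq_add_neg, AddChar.map_add_eq_mul,
          AddChar.map_neg_eq_conj]
        exact sum_congr rfl fun x _ ↦ sum_congr rfl fun y _ ↦ by ring
    _ = ∑ x, ∑ y, f x * conj (g y) * ∑ χ : AddChar G ℂ, χ (x - y) := by
        simp_rw [mul_sum]
        rw [sum_comm]
        exact sum_congr rfl fun x _ ↦ sum_comm
    _ = Fintype.card G * ∑ x, f x * conj (g x) := by
        simp_rw [AddChar.sum_apply_eq_ite, sub_eq_zero, mul_ite, mul_zero, sum_ite_eq, mem_univ,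
          if_true, ← sum_mul, mul_comm]

lemma sum_norm_charSum_sq (f : G → ℂ) :
    ∑ χ, ‖charSum f χ‖ ^ 2 = Fintype.card G * ∑ x, ‖f x‖ ^ 2 := by
  have h := sum_charSum_mul_conj f f
  simp_rw [Complex.mul_conj'] at h
  exact_mod_cast h

lemma sum_charSum_mul_charSum_mul_conj (f g h : G → ℂ) :
    ∑ χ, charSum f χ * charSum g χ * conj (charSum h χ) =
      Fintype.card G * ∑ x, ∑ y, f x * g y * conj (h (x + y)) := by
  simp_rw [← charSum_convolution, sum_charSum_mul_conj, sum_mul]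
  congr 1
  calc ∑ z, ∑ y, f (z - y) * g y * conj (h z)
      = ∑ y, ∑ z, f (z - y) * g y * conj (h z) := sum_comm
    _ = ∑ y, ∑ x, f x * g y * conj (h (x + y)) :=
        sum_congr rfl fun y _ ↦ Fintype.sum_equiv (Equiv.subRight y) _ _ (by simp)
    _ = ∑ x, ∑ y, f x * g y * conj (h (x + y)) := sum_comm

lemma sum_norm_charSum_mul_norm_charSum_le (g h : G → ℂ) :
    ∑ χ, ‖charSum g χ‖ * ‖charSum h χ‖ ≤
      Fintype.card G * √((∑ x, ‖g x‖ ^ 2) * ∑ x, ‖h x‖ ^ 2) := by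
  refine (Real.sum_mul_le_sqrt_mul_sqrt univ _ _).trans_eq ?_
  rw [sum_norm_charSum_sq, sum_norm_charSum_sq, ← Real.sqrt_mul (by positivity),
    mul_mul_mul_comm, Real.sqrt_mul (by positivity), Real.sqrt_mul_self (by positivity)]

/-- The main term is the contribution of the trivial character. -/
lemma norm_card_mul_sum_mul_conj_add_sub_le {f : G → ℂ} {b : ℝ} (hb : 0 ≤ b)
    (hf : ∀ χ ≠ 0, ‖charSum f χ‖ ≤ b) (g h : G → ℂ) :
    ‖Fintype.card G * ∑ x, ∑ y, f x * g y * conj (h (x + y)) -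
        (∑ x, f x) * (∑ x, g x) * conj (∑ x, h x)‖ ≤
      b * (Fintype.card G * √((∑ x, ‖g x‖ ^ 2) * ∑ x, ‖h x‖ ^ 2)) := by
  classical
  rw [← sum_charSum_mul_charSum_mul_conj, ← charSum_zero f, ← charSum_zero g, ← charSum_zero h,
    ← sum_erase_eq_sub (mem_univ _)]
  calc ‖∑ χ ∈ univ.erase 0, charSum f χ * charSum g χ * conj (charSum h χ)‖
      ≤ ∑ χ ∈ univ.erase 0, b * (‖charSum g χ‖ * ‖charSum h χ‖) := by
        refine norm_sum_le_of_le _ fun χ hχ ↦ ?_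
        rw [norm_mul, norm_mul, RCLike.norm_conj, mul_assoc]
        gcongr
        exact hf χ (ne_of_mem_erase hχ)
    _ ≤ ∑ χ, b * (‖charSum g χ‖ * ‖charSum h χ‖) :=
        sum_le_sum_of_subset_of_nonneg (erase_subset _ _) fun _ _ _ ↦ by positivity
    _ ≤ _ := by
        rw [← mul_sum]
        gcongr
        exact sum_norm_charSum_mul_norm_charSum_le g h

lemma norm_one_sub_mul_norm_charSum_le (f : G → ℂ) (χ : AddChar G ℂ) (g : G) :
    ‖1 - χ g‖ * ‖charSum f χ‖ ≤ ∑ x, ‖f (x + g) - f x‖ := by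
  have translate : charSum f χ = χ g * charSum (fun x ↦ f (x + g)) χ := by
    rw [charSum, ← Equiv.sum_comp (Equiv.addRight g), charSum, mul_sum]
    simp_rw [Equiv.coe_addRight, AddChar.map_add_eq_mul, mul_left_comm (χ g), mul_comm (χ g)]
  have difference : (1 - χ g) * charSum f χ = χ g * ∑ x, (f (x + g) - f x) * χ x := by
    rw [sub_mul, one_mul]
    nth_rw 1 [translate]
    simp_rw [charSum, sub_mul, sum_sub_distrib, mul_sub]
  rw [← norm_mul, difference, norm_mul, AddChar.norm_apply, one_mul]
  refine norm_sum_le_of_le _ fun x _ ↦ ?_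
  rw [norm_mul, AddChar.norm_apply, mul_one]

variable [DecidableEq G]

lemma two_mul_norm_sum_addChar_le (A : Finset G) {χ : AddChar G ℂ} {g : G} (hg : χ g = -1) :
    2 * ‖∑ x ∈ A, χ x‖ ≤ #{x | ¬(x + g ∈ A ↔ x ∈ A)} := by
  have h := norm_one_sub_mul_norm_charSum_le (fun x ↦ if x ∈ A then 1 else 0) χ g
  rw [charSum_ite_mem, hg, sub_neg_eq_add, one_add_one_eq_two, Complex.norm_ofNat] at h
  refine h.trans_eq ?_
  rw [card_filter, Nat.cast_sum]
  refine sum_congr rfl fun x _ ↦ ?_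
  by_cases x + g ∈ A <;> by_cases x ∈ A <;> simp [*]

lemma abs_card_filter_add_mem_sub_le {A : Finset G} {b : ℝ} (hb : 0 ≤ b)
    (hA : ∀ χ : AddChar G ℂ, χ ≠ 0 → ‖∑ x ∈ A, χ x‖ ≤ b) (B C : Finset G) :
    |(#{p ∈ A ×ˢ B | p.1 + p.2 ∈ C} : ℝ) - #A * #B * #C / Fintype.card G| ≤ b * √(#B * #C) := by
  let ind (S : Finset G) (x : G) : ℂ := if x ∈ S then 1 else 0
  have sum_ind (S : Finset G) : ∑ x, ind S x = #S := by simp [ind]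
  have sum_norm_sq_ind (S : Finset G) : ∑ x, ‖ind S x‖ ^ 2 = #S := by simp [ind, apply_ite]
  have sum_triple : ∑ x, ∑ y, ind A x * ind B y * conj (ind C (x + y)) =
      #{p ∈ A ×ˢ B | p.1 + p.2 ∈ C} := by
    simp_rw [mul_assoc, ← mul_sum, ind, ite_mul, one_mul, zero_mul, sum_ite_mem, univ_inter,
      apply_ite (starRingEnd ℂ), map_one, map_zero]
    rw [card_filter, sum_product]
    push_cast
    rfl
  have hG : (0 : ℝ) < Fintype.card G := by exact_mod_cast Fintype.card_pos
  have bound := norm_card_mul_sum_mul_conj_add_sub_le hb (f := ind A)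
    (by simpa only [ind, charSum_ite_mem] using hA) (ind B) (ind C)
  simp_rw [sum_triple, sum_ind, sum_norm_sq_ind, Complex.conj_natCast] at bound
  have bound_real : |(Fintype.card G : ℝ) * #{p ∈ A ×ˢ B | p.1 + p.2 ∈ C} - #A * #B * #C| ≤
      b * (Fintype.card G * √(#B * #C)) := by exact_mod_cast bound
  refine le_of_mul_le_mul_left ?_ hG
  rwa [mul_left_comm, ← abs_of_pos hG, ← abs_mul, abs_of_pos hG, mul_sub,
    mul_div_cancel₀ _ hG.ne']

lemma abs_card_filter_add_mem_div_sub_one_eighth_le {A : Finset G}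
    (hhalf : 2 * #A = Fintype.card G) {b : ℝ} (hb : 0 ≤ b)
    (hA : ∀ χ : AddChar G ℂ, χ ≠ 0 → ‖∑ x ∈ A, χ x‖ ≤ b) :
    |(#{p ∈ A ×ˢ A | p.1 + p.2 ∈ A} : ℝ) / Fintype.card G ^ 2 - 1 / 8| ≤
      b / (2 * Fintype.card G) := by
  have bound := abs_card_filter_add_mem_sub_le hb hA A A
  have hG : (0 : ℝ) < Fintype.card G := by exact_mod_cast Fintype.card_pos
  have hcard : (#A : ℝ) = Fintype.card G / 2 := by
    rw [← hhalf]
    simp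
  rw [Real.sqrt_mul_self (Nat.cast_nonneg _), hcard] at bound
  set n : ℝ := (Fintype.card G : ℝ)
  set t : ℝ := (#{p ∈ A ×ˢ A | p.1 + p.2 ∈ A} : ℝ)
  calc |t / n ^ 2 - 1 / 8|
      = |(t - n / 2 * (n / 2) * (n / 2) / n) / n ^ 2| := by
        congr 1
        field_simp
        ring
    _ = |t - n / 2 * (n / 2) * (n / 2) / n| / n ^ 2 := by
        rw [abs_div, abs_of_pos (pow_pos hG 2)]
    _ ≤ b * (n / 2) / n ^ 2 := by gcongr
    _ = b / (2 * n) := by field_simp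

end FourierAnalysis

section CentralBinomialCoefficients

open Filter Topology

lemma sq_centralBinom_div_four_pow (n : ℕ) :
    ((n.centralBinom : ℝ) / 4 ^ n) ^ 2 = (Real.Wallis.W n * (2 * n + 1))⁻¹ := by
  rw [Real.Wallis.W_eq_factorial_ratio, Nat.centralBinom_eq_two_mul_choose,
    Nat.cast_choose ℝ (by lia : n ≤ 2 * n), two_mul n, Nat.add_sub_cancel, ← two_mul]
  have four_pow : (4 : ℝ) ^ n = 2 ^ (2 * n) := by
    rw [pow_mul]
    norm_num
  rw [four_pow]
  field_simp
  ring

lemma tendsto_centralBinom_div_four_pow :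
    Tendsto (fun n : ℕ ↦ (n.centralBinom : ℝ) / 4 ^ n) atTop (𝓝 0) := by
  have hatTop : Tendsto (fun n : ℕ ↦ Real.Wallis.W n * (2 * n + 1)) atTop atTop :=
    Real.Wallis.tendsto_W_nhds_pi_div_two.pos_mul_atTop (by positivity)
      (tendsto_atTop_add_const_right _ _ (tendsto_natCast_atTop_atTop.const_mul_atTop two_pos))
  have hsqrt := hatTop.inv_tendsto_atTop.sqrt
  simp only [Pi.inv_apply, ← sq_centralBinom_div_four_pow, Real.sqrt_zero] at hsqrt
  exact hsqrt.congr fun n ↦ Real.sqrt_sq (by positivity)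

end CentralBinomialCoefficients

section Majority

variable {E : Type*}

lemma exists_apply_single_ne_one [Finite E] [DecidableEq E] {M : E → Type*}
    [∀ i, AddCommMonoid (M i)] {R : Type*} [CommMonoid R] {χ : AddChar (∀ i, M i) R} (hχ : χ ≠ 0) :
    ∃ i, ∃ a : M i, χ (Pi.single i a) ≠ 1 := by
  contrapose! hχ
  have h : χ.toAddMonoidHom = 0 := AddMonoidHom.functions_ext _ _ _ fun i a ↦ by
    simpa using hχ i a
  exact AddChar.toAddMonoidHomEquiv.injective h

lemma exists_apply_single_eq_neg_one [Finite E] [DecidableEq E] {R : Type*} [CommRing R]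
    [NoZeroDivisors R] {χ : AddChar (E → ZMod 2) R} (hχ : χ ≠ 0) :
    ∃ i, χ (Pi.single i 1) = -1 := by
  obtain ⟨i, a, ha⟩ := exists_apply_single_ne_one hχ
  have ha_zero : a ≠ 0 := by
    rintro rfl
    exact ha (by rw [Pi.single_zero, AddChar.map_zero_eq_one])
  obtain rfl : a = 1 := (by decide : ∀ a : ZMod 2, a ≠ 0 → a = 1) a ha_zero
  have hsq : χ (Pi.single i 1) * χ (Pi.single i 1) = 1 := by
    rw [← AddChar.map_add_eq_mul, ← Pi.single_add, CharTwo.add_self_eq_zero, Pi.single_zero,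
      AddChar.map_zero_eq_one]
  exact ⟨i, (mul_self_eq_one_iff.mp hsq).resolve_left ha⟩

variable [Fintype E]

lemma hammingNorm_add_hammingNorm_add_one (x : E → ZMod 2) :
    hammingNorm x + hammingNorm (x + 1) = Fintype.card E := by
  have h : ∀ a : ZMod 2, a + 1 ≠ 0 ↔ ¬a ≠ 0 := by decide
  simp_rw [hammingNorm, Pi.add_apply, Pi.one_apply, h]
  exact card_filter_add_card_filter_not _

variable [DecidableEq E]

lemma hammingNorm_eq_add_card_erase {M : E → Type*} [∀ i, Zero (M i)] [∀ i, DecidableEq (M i)]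
    (x : ∀ i, M i) (i : E) :
    hammingNorm x = (if x i ≠ 0 then 1 else 0) + #{j ∈ univ.erase i | x j ≠ 0} := by
  rw [hammingNorm, card_filter, card_filter,
    add_sum_erase _ (fun j ↦ if x j ≠ 0 then 1 else 0) (mem_univ i)]

/-- The majority family `𝒰_m`, a subset of `E` being encoded as its indicator in `E → ZMod 2`. -/
def majority (E : Type*) [Fintype E] [DecidableEq E] (m : ℕ) : Finset (E → ZMod 2) :=
  {x | m < hammingNorm x}

@[simp]
lemma mem_majority {m : ℕ} {x : E → ZMod 2} : x ∈ majority E m ↔ m < hammingNorm x := by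
  simp [majority]

lemma two_mul_card_majority {m : ℕ} (hE : Fintype.card E = 2 * m + 1) :
    2 * #(majority E m) = Fintype.card (E → ZMod 2) := by
  have hcompl : #(majority E m) = #(majority E m)ᶜ :=
    card_equiv (Equiv.addRight 1) fun x ↦ by
      have hsum := hammingNorm_add_hammingNorm_add_one x
      simp only [Equiv.coe_addRight, mem_compl, mem_majority]
      lia
  rw [two_mul, ← card_add_card_compl (majority E m), ← hcompl]

lemma card_erase_eq_of_pivotal {m : ℕ} {x : E → ZMod 2} {i : E}
    (hx : ¬(x + Pi.single i 1 ∈ majority E m ↔ x ∈ majority E m)) :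
    #{j ∈ univ.erase i | x j ≠ 0} = m := by
  have hrest : #{j ∈ univ.erase i | (x + Pi.single i 1 : E → ZMod 2) j ≠ 0} =
      #{j ∈ univ.erase i | x j ≠ 0} :=
    congrArg card <| filter_congr fun j hj ↦ by simp [ne_of_mem_erase hj]
  have h := hammingNorm_eq_add_card_erase x i
  have hflip := hammingNorm_eq_add_card_erase (x + Pi.single i 1) i
  rw [hrest] at hflip
  rw [mem_majority, mem_majority] at hx
  split_ifs at h hflip <;> lia

lemma card_pivotal_le (m : ℕ) (i : E) :
    #{x | ¬(x + Pi.single i 1 ∈ majority E m ↔ x ∈ majority E m)} ≤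
      2 * (Fintype.card E - 1).choose m := by
  let support (x : E → ZMod 2) : Finset E := {j ∈ univ.erase i | x j ≠ 0}
  calc #{x | ¬(x + Pi.single i 1 ∈ majority E m ↔ x ∈ majority E m)}
      ≤ #((univ : Finset (ZMod 2)) ×ˢ powersetCard m (univ.erase i)) := by
        refine card_le_card_of_injOn (fun x ↦ (x i, support x)) (fun x hx ↦ ?_) fun x _ y _ hxy ↦ ?_
        · have hm : #(support x) = m := card_erase_eq_of_pivotal (mem_filter.mp hx).2
          simp [mem_powersetCard, hm, support, filter_subset]
        · obtain ⟨hi, hsupport⟩ := Prod.mk.inj hxy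
          have heq : ∀ a b : ZMod 2, (a ≠ 0 ↔ b ≠ 0) → a = b := by decide
          funext j
          rcases eq_or_ne j i with rfl | hj
          · exact hi
          · exact heq _ _ (by simpa [support, hj] using Finset.ext_iff.mp hsupport j)
    _ = 2 * (Fintype.card E - 1).choose m := by
        rw [card_product, card_powersetCard, card_erase_of_mem (mem_univ i), card_univ, card_univ,
          ZMod.card]

lemma norm_sum_majority_le {m : ℕ} (hE : Fintype.card E = 2 * m + 1)
    {χ : AddChar (E → ZMod 2) ℂ} (hχ : χ ≠ 0) :
    ‖∑ x ∈ majority E m, χ x‖ ≤ m.centralBinom := by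
  obtain ⟨i, hi⟩ := exists_apply_single_eq_neg_one hχ
  have hpivotal := card_pivotal_le m i
  rw [hE, Nat.add_sub_cancel, ← Nat.centralBinom_eq_two_mul_choose] at hpivotal
  have h : 2 * ‖∑ x ∈ majority E m, χ x‖ ≤ 2 * m.centralBinom :=
    (two_mul_norm_sum_addChar_le _ hi).trans (mod_cast hpivotal)
  linarith

end Majority

section Coloring

/-- The colors `a, b, c, d` as `(1, 1), (1, 0), (0, 1), (0, 0)`: the coordinates of a color indicate
its membership in `{a, b}` and in `{a, c}`, and their sum its membership in `{b, c}`. -/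
noncomputable def colorEquiv : Fin 4 ≃ ZMod 2 × ZMod 2 :=
  Equiv.ofBijective ![(1, 1), (1, 0), (0, 1), (0, 0)] (by decide)

/-- A coloring as a pair of vectors over `ZMod 2`, through `colorEquiv` at each element. -/
noncomputable def coloringEquiv (E : Type*) : (E → Fin 4) ≃ (E → ZMod 2) × (E → ZMod 2) :=
  ((Equiv.refl E).arrowCongr colorEquiv).trans (Equiv.arrowProdEquivProdArrow E _ _)

variable {E : Type*} [Fintype E] [DecidableEq E]

lemma card_Est_zero_one (f : E → Fin 4) : #(Est f 0 1) = hammingNorm (coloringEquiv E f).1 := by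
  have h : ∀ c, c = 0 ∨ c = 1 ↔ (colorEquiv c).1 ≠ 0 := by
    simp only [colorEquiv, Equiv.ofBijective_apply]
    decide
  simp only [Est, h]
  rfl

lemma card_Est_zero_two (f : E → Fin 4) : #(Est f 0 2) = hammingNorm (coloringEquiv E f).2 := by
  have h : ∀ c, c = 0 ∨ c = 2 ↔ (colorEquiv c).2 ≠ 0 := by
    simp only [colorEquiv, Equiv.ofBijective_apply]
    decide
  simp only [Est, h]
  rfl

lemma card_Est_one_two (f : E → Fin 4) :
    #(Est f 1 2) = hammingNorm ((coloringEquiv E f).1 + (coloringEquiv E f).2) := by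
  have h : ∀ c, c = 1 ∨ c = 2 ↔ (colorEquiv c).1 + (colorEquiv c).2 ≠ 0 := by
    simp only [colorEquiv, Equiv.ofBijective_apply]
    decide
  simp only [Est, h]
  rfl

lemma card_majority_coloring (m : ℕ) :
    #{f : E → Fin 4 | m < #(Est f 0 1) ∧ m < #(Est f 0 2) ∧ m < #(Est f 1 2)} =
      #{p ∈ majority E m ×ˢ majority E m | p.1 + p.2 ∈ majority E m} :=
  card_equiv (coloringEquiv E) fun f ↦ by
    simp [card_Est_zero_one, card_Est_zero_two, card_Est_one_two, and_assoc]

lemma abs_majority_prob_sub_one_eighth_le {m : ℕ} (hE : Fintype.card E = 2 * m + 1) :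
    |(#{f : E → Fin 4 | m < #(Est f 0 1) ∧ m < #(Est f 0 2) ∧ m < #(Est f 1 2)} : ℝ) /
        4 ^ (2 * m + 1) - 1 / 8| ≤ m.centralBinom / 4 ^ m / 4 := by
  have hcard : (Fintype.card (E → ZMod 2) : ℝ) = 2 ^ (2 * m + 1) := by simp [hE]
  have h := abs_card_filter_add_mem_div_sub_one_eighth_le (two_mul_card_majority hE)
    (Nat.cast_nonneg _) fun _ ↦ norm_sum_majority_le hE
  have hcard_sq : ((2 : ℝ) ^ (2 * m + 1)) ^ 2 = 4 ^ (2 * m + 1) := by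
    rw [pow_right_comm]
    norm_num
  have htwo_mul_card : (2 : ℝ) * 2 ^ (2 * m + 1) = 4 ^ m * 4 := by
    rw [← pow_succ', ← pow_succ, (by lia : 2 * m + 1 + 1 = 2 * (m + 1)), pow_mul]
    norm_num
  rwa [hcard, hcard_sq, htwo_mul_card, ← card_majority_coloring, ← div_div] at h

end Coloring

/-- For uniform random 4-colorings of finite sets `E_m` with `|E_m| = 2m+1`, the
probability that each of `E_{ab}(f)`, `E_{ac}(f)`, `E_{bc}(f)` has more than `m` elements
(the majority property) tends to `1/8` as `m → ∞`. -/
theorem majority_limit_abc (E : ℕ → Type*) [∀ m, Fintype (E m)] [∀ m, DecidableEq (E m)]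
    (hcard : ∀ m, Fintype.card (E m) = 2 * m + 1) :
    Filter.Tendsto
      (fun m =>
        ((Finset.univ.filter (fun f : E m → Fin 4 =>
            m < (Est f 0 1).card ∧ m < (Est f 0 2).card ∧ m < (Est f 1 2).card)).card : ℝ)
          / 4 ^ (2 * m + 1))
      Filter.atTop (nhds (1 / 8)) := by
  rw [tendsto_iff_dist_tendsto_zero]
  refine squeeze_zero (fun _ ↦ dist_nonneg)
    (fun m ↦ abs_majority_prob_sub_one_eighth_le (hcard m)) ?_
  simpa using tendsto_centralBinom_div_four_pow.div_const 4
end
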